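/- arXiv:2410.01760 — 2 statements merged into one kernel-verified Lean document; each statement's English description precedes it below -/
import Mathlib

section
/- There is an absolute constant c such that for every caching instance with cache size k ≥ 10, the AlternatingOracle strategy B satisfies E[OBJ_B] ≤ max{ 230·OPT + 60·√(60·η·OPT / k), c }, where the expectation is taken over the internal random choices of the algorithm and η = Σ_{t=1}^T |ν(t) − ω(t)| is the total prediction loss. -/
namespace Caching

attribute [local instance low] Classical.propDecidable

/-- A run of a feasible eviction strategy on the request sequence `σ` with cache size `k`
and time horizon `T`.  `C t` is the cache after processing request `t` (with `C 0 = ∅`),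
and `p t` is the page evicted at time `t` (meaningful at full-cache misses). -/
structure CacheRun (S : Type) [DecidableEq S] (k T : ℕ) (σ : ℕ → S) where
  C : ℕ → Finset S
  p : ℕ → S
  init : C 0 = ∅
  card_le : ∀ t, (C t).card ≤ k
  hit : ∀ t, 1 ≤ t → t ≤ T → (σ t ∈ C (t - 1) ∨ (C (t - 1)).card < k) →
      C t = insert (σ t) (C (t - 1))
  evict_mem : ∀ t, 1 ≤ t → t ≤ T → σ t ∉ C (t - 1) → (C (t - 1)).card = k →
      p t ∈ C (t - 1)
  evict : ∀ t, 1 ≤ t → t ≤ T → σ t ∉ C (t - 1) → (C (t - 1)).card = k →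
      C t = insert (σ t) ((C (t - 1)).erase (p t))

variable {S : Type} [DecidableEq S]

/- `nextReq σ T t` is `ν(t)`: the first time `s > t` (with `s ≤ T`) at which the page
`σ t` is requested again, and `T + 1` if there is no such time. -/
open Classical in
noncomputable def nextReq (σ : ℕ → S) (T t : ℕ) : ℕ :=
  if h : ∃ s, t < s ∧ s ≤ T ∧ σ s = σ t then Nat.find h else T + 1

/-- The total prediction loss `η = Σ_{t=1}^T |ν(t) - ω(t)|`. -/
noncomputable def totalLoss (σ : ℕ → S) (T : ℕ) (ω : ℕ → ℕ) : ℕ :=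
  ∑ t ∈ Finset.Icc 1 T, Nat.dist (nextReq σ T t) (ω t)

/-- `I_Q(t)`: indices of the last requests (up to time `t`) of the currently cached pages. -/
noncomputable def lastIdx {k T : ℕ} {σ : ℕ → S} (R : CacheRun S k T σ) (t : ℕ) : Finset ℕ :=
  (Finset.Icc 1 t).filter fun i => σ i ∈ R.C t ∧ ∀ j ∈ Finset.Icc (i + 1) t, σ j ≠ σ i

/-- Time `t` is a full-cache miss (an eviction step). -/
def EvictStep {k T : ℕ} {σ : ℕ → S} (R : CacheRun S k T σ) (t : ℕ) : Prop :=
  1 ≤ t ∧ t ≤ T ∧ σ t ∉ R.C (t - 1) ∧ (R.C (t - 1)).card = k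

/-- At time `t` the run evicts the page whose last-request index is `i`. -/
def EvictsIdx {k T : ℕ} {σ : ℕ → S} (R : CacheRun S k T σ) (t i : ℕ) : Prop :=
  EvictStep R t ∧ i ∈ lastIdx R (t - 1) ∧ R.p t = σ i

/-- `OBJ_Q`: the number of cache misses of the run. -/
noncomputable def misses {k T : ℕ} {σ : ℕ → S} (R : CacheRun S k T σ) : ℕ :=
  ((Finset.Icc 1 T).filter fun t => σ t ∉ R.C (t - 1)).card

/-- Belady's algorithm: on a full-cache miss always evict the cached page with the
largest next-request time. -/
def IsBelady {k T : ℕ} {σ : ℕ → S} (A : CacheRun S k T σ) : Prop :=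
  ∀ t, EvictStep A t → ∀ i ∈ lastIdx A (t - 1), A.p t = σ i →
    ∀ j ∈ lastIdx A (t - 1), nextReq σ T j ≤ nextReq σ T i

/-- BlindOracle: on a full-cache miss always evict the cached page with the largest
predicted next-request time. -/
def IsBlindOracle {k T : ℕ} {σ : ℕ → S} (B : CacheRun S k T σ) (ω : ℕ → ℕ) : Prop :=
  ∀ t, EvictStep B t → ∀ i ∈ lastIdx B (t - 1), B.p t = σ i →
    ∀ j ∈ lastIdx B (t - 1), ω j ≤ ω i

/-- An eviction graph of a run: a directed graph on `{1,…,T}` whose every edge `(i, j)`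
corresponds to a distinct time (`time e`) at which the run made a mistake by evicting
page `σ j` while `i` was a strictly better eviction candidate in the cache. -/
structure EvictionGraph {k T : ℕ} {σ : ℕ → S} (R : CacheRun S k T σ) where
  E : Finset (ℕ × ℕ)
  time : ℕ × ℕ → ℕ
  time_inj : ∀ e ∈ E, ∀ e' ∈ E, time e = time e' → e = e'
  mistake : ∀ e ∈ E, EvictsIdx R (time e) e.2 ∧ e.1 ∈ lastIdx R (time e - 1) ∧
      nextReq σ T e.2 < nextReq σ T e.1

/-- The eviction at time `t` triggers the eviction at time `t'`: the page evicted
at `t` is next requested at `t' = ν(i)`, which is again an eviction step. -/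
def Triggers {k T : ℕ} {σ : ℕ → S} (R : CacheRun S k T σ) (t t' : ℕ) : Prop :=
  ∃ i, EvictsIdx R t i ∧ t' = nextReq σ T i ∧ ∃ j, EvictsIdx R t' j

/-- The eviction of the page with last-request index `i` triggers the eviction of the
page with last-request index `j` (at time `ν(i)`). -/
def TriggersIdx {k T : ℕ} {σ : ℕ → S} (R : CacheRun S k T σ) (i j : ℕ) : Prop :=
  (∃ t, EvictsIdx R t i) ∧ EvictsIdx R (nextReq σ T i) j

/-- The page requested at time `t` was never requested before. -/
def NewPage (σ : ℕ → S) (t : ℕ) : Prop := ∀ s, 1 ≤ s → s < t → σ s ≠ σ t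

/-- At time `t` the evicted page has the largest prediction among cached pages. -/
def BlindChoiceAt {k T : ℕ} {σ : ℕ → S} (R : CacheRun S k T σ) (ω : ℕ → ℕ) (t : ℕ) : Prop :=
  ∀ i ∈ lastIdx R (t - 1), R.p t = σ i → ∀ j ∈ lastIdx R (t - 1), ω j ≤ ω i

/-- Corrector's choice at time `t`: if some cached page has a provably wrong prediction
(`ω i < t`), evict such a page with minimal prediction; otherwise act as BlindOracle. -/
def CorrectorChoiceAt {k T : ℕ} {σ : ℕ → S} (R : CacheRun S k T σ) (ω : ℕ → ℕ) (t : ℕ) :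
    Prop :=
  ((∃ i ∈ lastIdx R (t - 1), ω i < t) →
    ∀ i ∈ lastIdx R (t - 1), R.p t = σ i →
      ω i < t ∧ ∀ j ∈ lastIdx R (t - 1), ω j < t → ω i ≤ ω j) ∧
  ((¬ ∃ i ∈ lastIdx R (t - 1), ω i < t) → BlindChoiceAt R ω t)

/-- The page requested at time `t` was last evicted (before `t`) at a step labeled with
strategy `s₀` (0 = BlindOracle, 1 = RandomAlg, 2 = Corrector). -/
def LastEvictedWith {k T : ℕ} {σ : ℕ → S} (R : CacheRun S k T σ) (strat : ℕ → Fin 3)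
    (t : ℕ) (s₀ : Fin 3) : Prop :=
  ∃ t₀, t₀ < t ∧ EvictStep R t₀ ∧ R.p t₀ = σ t ∧ strat t₀ = s₀ ∧
    ∀ t₁, t₀ < t₁ → t₁ < t → ¬(EvictStep R t₁ ∧ R.p t₁ = σ t)

/-- A run of the AlternatingOracle strategy (for a fixed realization of its random
choices), together with the labeling `strat` of which of the three strategies was used
at each eviction step: on a miss for a never-requested page use BlindOracle; if the
requested page was last evicted by BlindOracle use RandomAlg (an arbitrary cached page);
if by RandomAlg use Corrector; if by Corrector use BlindOracle. -/
def IsAlternatingOracle {k T : ℕ} {σ : ℕ → S} (R : CacheRun S k T σ) (ω : ℕ → ℕ)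
    (strat : ℕ → Fin 3) : Prop :=
  ∀ t, EvictStep R t →
    (NewPage σ t → strat t = 0 ∧ BlindChoiceAt R ω t) ∧
    (LastEvictedWith R strat t 0 → strat t = 1) ∧
    (LastEvictedWith R strat t 1 → strat t = 2 ∧ CorrectorChoiceAt R ω t) ∧
    (LastEvictedWith R strat t 2 → strat t = 0 ∧ BlindChoiceAt R ω t)

/-- AlternatingOracle driven by a seed `u` of uniform random values: at each eviction
step performed by RandomAlg at time `t`, the evicted page is the one whose last-request
index has rank `u t` among the `k` cached indices, so that for a uniformly random seed
the evicted page is uniform over the cache. -/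
def IsAlternatingOracleSeeded {k T : ℕ} {σ : ℕ → S} (R : CacheRun S k T σ) (ω : ℕ → ℕ)
    (strat : ℕ → Fin 3) (u : Fin (T + 1) → Fin k) : Prop :=
  IsAlternatingOracle R ω strat ∧
  ∀ t (h : EvictStep R t), strat t = 1 →
    ∀ i ∈ lastIdx R (t - 1), R.p t = σ i →
      ((lastIdx R (t - 1)).filter fun j => j < i).card =
        ((u ⟨t, Nat.lt_succ_of_le h.2.1⟩ : Fin k) : ℕ)

/-- The family of runs is adapted to the seeds: the behavior up to time `t` depends only
on the seed values with index at most `t` (the strategy is online). -/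
def Adapted {k T : ℕ} {σ : ℕ → S} (R : (Fin (T + 1) → Fin k) → CacheRun S k T σ)
    (strat : (Fin (T + 1) → Fin k) → ℕ → Fin 3) : Prop :=
  ∀ u u' t, (∀ s : Fin (T + 1), (s : ℕ) ≤ t → u s = u' s) →
    (R u).C t = (R u').C t ∧ (R u).p t = (R u').p t ∧ strat u t = strat u' t

/-- The probability of the outcome `x` for `T` i.i.d. Bernoulli(γ) random bits. -/
noncomputable def bernWeight (γ : ℝ) {T : ℕ} (x : Fin T → Bool) : ℝ :=
  ∏ i, if x i then γ else 1 - γ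

/-- `S(x, m)`: the number of ones among the first `m` coordinates of `x`. -/
noncomputable def scount {T : ℕ} (x : Fin T → Bool) (m : ℕ) : ℕ :=
  (Finset.univ.filter fun i : Fin T => (i : ℕ) < m ∧ x i).card

/-! ### Generic finset lemmas -/

lemma card_le_of_rel {α β : Type*} {s : Finset α} {t : Finset β} (r : α → β → Prop)
    (h : ∀ a ∈ s, ∃ b ∈ t, r a b)
    (inj : ∀ a ∈ s, ∀ a' ∈ s, ∀ b, r a b → r a' b → a = a') : s.card ≤ t.card :=
  Finset.card_le_card_of_forall_subsingleton r h
    (fun b _ a ha a' ha' => inj a ha.1 a' ha'.1 b ha.2 ha'.2)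

lemma exists_inj_extend {α β : Type*} [DecidableEq α] (V : Finset α) (E : Finset β)
    (g0 : α → β) (hinj : ∀ x ∈ V, ∀ y ∈ V, g0 x = g0 y → x = y) (hmap : ∀ x ∈ V, g0 x ∈ E)
    (s : Finset α) : (V ∪ s).card ≤ E.card →
    ∃ g : α → β, (∀ x ∈ V, g x = g0 x) ∧ (∀ x ∈ V ∪ s, g x ∈ E) ∧
      (∀ x ∈ V ∪ s, ∀ y ∈ V ∪ s, g x = g y → x = y) := by
  induction s using Finset.induction_on with
  | empty =>
    intro _
    exact ⟨g0, fun _ _ => rfl, by simpa using hmap, by simpa using hinj⟩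
  | insert a s ha ih =>
    intro hc
    have hsub : V ∪ s ⊆ V ∪ insert a s :=
      Finset.union_subset_union_right (Finset.subset_insert a s)
    obtain ⟨g, h1, h2, h3⟩ := ih ((Finset.card_le_card hsub).trans hc)
    by_cases hav : a ∈ V ∪ s
    · have : V ∪ insert a s = V ∪ s := by
        rw [Finset.union_insert, Finset.insert_eq_of_mem hav]
      rw [this]
      exact ⟨g, h1, h2, h3⟩
    · have hcard : ((V ∪ s).image g).card < E.card := by
        refine lt_of_le_of_lt Finset.card_image_le ?_
        rw [Finset.union_insert, Finset.card_insert_of_notMem hav] at hc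
        omega
      obtain ⟨y, hyE, hy⟩ := Finset.exists_mem_notMem_of_card_lt_card hcard
      have hy' : ∀ x ∈ V ∪ s, g x ≠ y := fun x hx he => hy (Finset.mem_image.2 ⟨x, hx, he⟩)
      have hne : ∀ x ∈ V ∪ s, x ≠ a := fun x hx he => hav (he ▸ hx)
      refine ⟨fun x => if x = a then y else g x, ?_, ?_, ?_⟩
      · intro x hx
        have := hne x (Finset.mem_union_left _ hx)
        simp [this, h1 x hx]
      · intro x hx
        rw [Finset.union_insert, Finset.mem_insert] at hx
        rcases hx with hx | hx
        · simp [hx, hyE]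
        · simp [hne x hx, h2 x hx]
      · intro x hx z hz
        rw [Finset.union_insert, Finset.mem_insert] at hx hz
        rcases hx with hx | hx <;> rcases hz with hz | hz
        · simp [hx, hz]
        · simp only [hx, hne z hz, if_true, if_false]
          intro h
          exact absurd h.symm (hy' z hz)
        · simp only [hz, hne x hx, if_true, if_false]
          intro h
          exact absurd h (hy' x hx)
        · simp only [hne z hz, hne x hx, if_false]
          exact h3 x hx z hz

lemma exists_seq {α : Type*} (P : ℕ → α → Prop) (Q : ℕ → α → α → Prop) (h0 : ∃ a, P 0 a)
    (hs : ∀ t a, P t a → ∃ b, P (t + 1) b ∧ Q t a b) :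
    ∃ F : ℕ → α, ∀ t, P t (F t) ∧ Q t (F t) (F (t + 1)) := by
  choose! nx hnx using hs
  obtain ⟨a0, ha0⟩ := h0
  let F : ℕ → α := fun t => Nat.rec a0 (fun t a => nx t a) t
  have hP : ∀ t, P t (F t) := by
    intro t
    induction t with
    | zero => exact ha0
    | succ t ih => exact (hnx t (F t) ih).1
  exact ⟨F, fun t => ⟨hP t, (hnx t (F t) (hP t)).2⟩⟩

/-! ### Basic facts about runs -/

section Basic

variable {k T : ℕ} {σ : ℕ → S}

lemma step_cases (R : CacheRun S k T σ) (t : ℕ) (h1 : 1 ≤ t) (hT : t ≤ T) :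
    (¬ EvictStep R t ∧ R.C t = insert (σ t) (R.C (t - 1))) ∨
    (EvictStep R t ∧ R.p t ∈ R.C (t - 1) ∧
      R.C t = insert (σ t) ((R.C (t - 1)).erase (R.p t))) := by
  by_cases h : EvictStep R t
  · exact Or.inr ⟨h, R.evict_mem t h1 hT h.2.2.1 h.2.2.2, R.evict t h1 hT h.2.2.1 h.2.2.2⟩
  · refine Or.inl ⟨h, R.hit t h1 hT ?_⟩
    by_contra hc
    push Not at hc
    exact h ⟨h1, hT, hc.1, le_antisymm (R.card_le _) hc.2⟩

lemma mem_self (R : CacheRun S k T σ) {t : ℕ} (h1 : 1 ≤ t) (hT : t ≤ T) : σ t ∈ R.C t := by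
  rcases step_cases R t h1 hT with h | h
  · rw [h.2]; exact Finset.mem_insert_self _ _
  · rw [h.2.2]; exact Finset.mem_insert_self _ _

lemma step_sub (R : CacheRun S k T σ) {t : ℕ} (h1 : 1 ≤ t) (hT : t ≤ T) {x : S}
    (hx : x ∈ R.C t) : x = σ t ∨ x ∈ R.C (t - 1) := by
  rcases step_cases R t h1 hT with h | h
  · rw [h.2] at hx; exact Finset.mem_insert.1 hx
  · rw [h.2.2] at hx
    rcases Finset.mem_insert.1 hx with h | h
    · exact Or.inl h
    · exact Or.inr (Finset.mem_of_mem_erase h)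

/-- A page leaves the cache only by being evicted. -/
lemma step_drop (R : CacheRun S k T σ) {t : ℕ} (h1 : 1 ≤ t) (hT : t ≤ T) {x : S}
    (hx : x ∈ R.C (t - 1)) (hx' : x ∉ R.C t) : EvictStep R t ∧ x = R.p t := by
  rcases step_cases R t h1 hT with h | h
  · rw [h.2] at hx'; exact absurd (Finset.mem_insert_of_mem hx) hx'
  · refine ⟨h.1, ?_⟩
    by_contra hne
    rw [h.2.2] at hx'
    exact hx' (Finset.mem_insert_of_mem (Finset.mem_erase.2 ⟨hne, hx⟩))

lemma evict_mem' {R : CacheRun S k T σ} {t : ℕ} (h : EvictStep R t) : R.p t ∈ R.C (t - 1) :=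
  R.evict_mem t h.1 h.2.1 h.2.2.1 h.2.2.2

lemma evict_ne {R : CacheRun S k T σ} {t : ℕ} (h : EvictStep R t) : R.p t ≠ σ t :=
  fun he => h.2.2.1 (he ▸ evict_mem' h)

lemma evict_notMem {R : CacheRun S k T σ} {t : ℕ} (h : EvictStep R t) : R.p t ∉ R.C t := by
  rw [R.evict t h.1 h.2.1 h.2.2.1 h.2.2.2]
  simp [evict_ne h]

lemma stay_out (R : CacheRun S k T σ) {a : ℕ} {x : S} (hx : x ∉ R.C a) (b : ℕ) (hab : a ≤ b)
    (hb : b ≤ T) (hr : ∀ s, a < s → s ≤ b → σ s ≠ x) : x ∉ R.C b := by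
  induction b, hab using Nat.le_induction with
  | base => exact hx
  | succ b hab ih =>
    intro hc
    rcases step_sub R (by omega) hb hc with h | h
    · exact hr (b + 1) (by omega) le_rfl h.symm
    · exact ih (by omega) (fun s h1 h2 => hr s h1 (by omega)) h

lemma requested (R : CacheRun S k T σ) (t : ℕ) (hT : t ≤ T) {x : S} (hx : x ∈ R.C t) :
    ∃ s, 1 ≤ s ∧ s ≤ t ∧ σ s = x := by
  by_contra hc
  push Not at hc
  exact stay_out R (a := 0) (by simp [R.init]) t (by omega) hT
    (fun s h1 h2 => hc s h1 h2) hx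

lemma full_or (R : CacheRun S k T σ) (t : ℕ) (hT : t ≤ T) :
    (R.C t).card = k ∨ ∀ s, 1 ≤ s → s ≤ t → σ s ∈ R.C t := by
  induction t with
  | zero => right; intro s h1 h2; omega
  | succ t ih =>
    have hc := step_cases R (t + 1) (by omega) hT
    simp only [Nat.add_sub_cancel] at hc
    rcases hc with ⟨hne, hC⟩ | ⟨he, hp, hC⟩
    · rcases ih (by omega) with h | h
      · left
        by_cases hm : σ (t + 1) ∈ R.C t
        · rw [hC, Finset.insert_eq_of_mem hm, h]
        · exact absurd ⟨by omega, hT, hm, h⟩ hne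
      · right
        intro s h1 h2
        rw [hC]
        rcases Nat.lt_or_ge t s with h3 | h3
        · have : s = t + 1 := by omega
          rw [this]; exact Finset.mem_insert_self _ _
        · exact Finset.mem_insert_of_mem (h s h1 h3)
    · left
      have h1 : σ (t + 1) ∉ R.C t := he.2.2.1
      have h2 : (R.C t).card = k := he.2.2.2
      rw [hC, Finset.card_insert_of_notMem (fun h => h1 (Finset.mem_of_mem_erase h)),
        Finset.card_erase_of_mem hp, h2]
      have : 0 < (R.C t).card := Finset.card_pos.2 ⟨_, hp⟩
      omega

lemma card_DE (A B : CacheRun S k T σ) (t : ℕ) (hT : t ≤ T) :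
    (A.C t \ B.C t).card ≤ (B.C t \ A.C t).card := by
  rw [Finset.card_sdiff_le_card_sdiff_iff]
  rcases full_or B t hT with h | h
  · rw [h]; exact A.card_le t
  · apply Finset.card_le_card
    intro x hx
    obtain ⟨s, h1, h2, rfl⟩ := requested A t hT hx
    exact h s h1 h2

lemma evict_uniq {R : CacheRun S k T σ} {a b τ : ℕ} (ha : EvictStep R a) (hb : EvictStep R b)
    (hp : R.p a = R.p b) (haτ : a ≤ τ) (hbτ : b ≤ τ)
    (hra : ∀ s, a < s → s ≤ τ → σ s ≠ R.p a) (hrb : ∀ s, b < s → s ≤ τ → σ s ≠ R.p b) :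
    a = b := by
  have key : ∀ a b, EvictStep R a → EvictStep R b → R.p a = R.p b → b ≤ τ →
      (∀ s, a < s → s ≤ τ → σ s ≠ R.p a) → ¬ a < b := by
    intro a b ha hb hp hbτ hra hlt
    have h1 := hb.2.1
    exact stay_out R (evict_notMem ha) (b - 1) (by omega) (by omega)
      (fun s h1 h2 => hra s h1 (by omega)) (hp ▸ evict_mem' hb)
  have h1 := key a b ha hb hp hbτ hra
  have h2 := key b a hb ha hp.symm haτ hrb
  omega

/-- The eviction at `t0` triggers the miss at `t`. -/
def Trig (R : CacheRun S k T σ) (t0 t : ℕ) : Prop :=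
  EvictStep R t0 ∧ t0 < t ∧ t ≤ T ∧ R.p t0 = σ t ∧ ∀ r, t0 < r → r < t → σ r ≠ R.p t0

lemma Trig.inj {R : CacheRun S k T σ} {a b t : ℕ} (ha : Trig R a t) (hb : Trig R b t) :
    a = b := by
  obtain ⟨a1, a2, a3, a4, a5⟩ := ha
  obtain ⟨b1, b2, b3, b4, b5⟩ := hb
  exact evict_uniq (τ := t - 1) a1 b1 (a4.trans b4.symm) (by omega) (by omega)
    (fun s h1 h2 => a5 s h1 (by omega)) (fun s h1 h2 => b5 s h1 (by omega))

lemma Trig.right_unique {R : CacheRun S k T σ} {t a b : ℕ} (ha : Trig R t a) (hb : Trig R t b) :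
    a = b := by
  obtain ⟨a1, a2, a3, a4, a5⟩ := ha
  obtain ⟨b1, b2, b3, b4, b5⟩ := hb
  rcases lt_trichotomy a b with h | h | h
  · exact absurd a4.symm (b5 a a2 h)
  · exact h
  · exact absurd b4.symm (a5 b b2 h)

lemma Trig.notMem {R : CacheRun S k T σ} {t0 t : ℕ} (h : Trig R t0 t) {τ : ℕ} (h1 : t0 ≤ τ)
    (h2 : τ < t) : R.p t0 ∉ R.C τ := by
  obtain ⟨a1, a2, a3, a4, a5⟩ := h
  exact stay_out R (evict_notMem a1) τ h1 (by omega) (fun s h3 h4 => a5 s h3 (by omega))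

lemma Trig.evictStep {R : CacheRun S k T σ} {t0 t : ℕ} (h : Trig R t0 t) : EvictStep R t := by
  have hn := h.notMem (τ := t - 1) (by have := h.2.1; omega) (by have := h.2.1; omega)
  obtain ⟨a1, a2, a3, a4, a5⟩ := h
  refine ⟨by omega, a3, a4 ▸ hn, ?_⟩
  rcases full_or R (t - 1) (by omega) with h | h
  · exact h
  · obtain ⟨s, h1, h2, h3⟩ := requested R (t0 - 1) (by omega) (evict_mem' a1)
    exact absurd (h s h1 (by omega)) (h3 ▸ hn)

lemma Trig.lastEv {R : CacheRun S k T σ} {t0 t : ℕ} (h : Trig R t0 t) (strat : ℕ → Fin 3) :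
    LastEvictedWith R strat t (strat t0) := by
  refine ⟨t0, h.2.1, h.1, h.2.2.2.1, rfl, ?_⟩
  rintro t1 h1 h2 ⟨h3, h4⟩
  have := h.notMem (τ := t1 - 1) (by omega) (by omega)
  rw [h.2.2.2.1, ← h4] at this
  exact this (evict_mem' h3)

lemma exists_trig (R : CacheRun S k T σ) {t : ℕ} (hT : t ≤ T)
    (hm : σ t ∉ R.C (t - 1)) (hn : ¬ NewPage σ t) : ∃ t0, Trig R t0 t := by
  unfold NewPage at hn
  push Not at hn
  have hex : ∃ s, (1 ≤ s ∧ s < t ∧ σ s = σ t) := by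
    obtain ⟨s, h1, h2, h3⟩ := hn; exact ⟨s, h1, h2, h3⟩
  -- the last time before `t` at which the page is in the cache
  have hex2 : ∃ s, s < t ∧ σ t ∈ R.C s := by
    obtain ⟨s, h1, h2, h3⟩ := hex
    exact ⟨s, h2, h3 ▸ mem_self R h1 (by omega)⟩
  let F := (Finset.range t).filter (fun s => σ t ∈ R.C s)
  have hF : F.Nonempty := by
    obtain ⟨s, h1, h2⟩ := hex2
    exact ⟨s, Finset.mem_filter.2 ⟨Finset.mem_range.2 h1, h2⟩⟩
  obtain ⟨s, hs, hmax⟩ := F.exists_max_image id hF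
  obtain ⟨hs1, hs2⟩ := Finset.mem_filter.1 hs
  have hs1 := Finset.mem_range.1 hs1
  have hlater : ∀ r, s < r → r < t → σ t ∉ R.C r := by
    intro r h1 h2 h3
    have := hmax r (Finset.mem_filter.2 ⟨Finset.mem_range.2 h2, h3⟩)
    simp at this; omega
  have hst : s + 1 < t := by
    rcases Nat.lt_or_ge (s + 1) t with h | h
    · exact h
    · have : s = t - 1 := by omega
      exact absurd hs2 (this ▸ hm)
  obtain ⟨he, hp⟩ := step_drop R (t := s + 1) (x := σ t) (by omega) (by omega) (by simpa using hs2)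
    (hlater _ (by omega) hst)
  refine ⟨s + 1, he, hst, hT, hp.symm, ?_⟩
  intro r h1 h2 h3
  have := mem_self R (t := r) (by omega) (by omega)
  rw [h3, ← hp] at this
  exact hlater r (by omega) h2 this

lemma new_miss (A : CacheRun S k T σ) {t : ℕ} (h1 : 1 ≤ t) (hT : t ≤ T) (hn : NewPage σ t) :
    σ t ∉ A.C (t - 1) := by
  intro h
  obtain ⟨s, h2, h3, h4⟩ := requested A (t - 1) (by omega) h
  exact hn s h2 (by omega) h4

lemma mem_lastIdx (R : CacheRun S k T σ) {t i : ℕ} : i ∈ lastIdx R t ↔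
    1 ≤ i ∧ i ≤ t ∧ σ i ∈ R.C t ∧ ∀ j, i < j → j ≤ t → σ j ≠ σ i := by
  unfold lastIdx
  simp only [Finset.mem_filter, Finset.mem_Icc]
  constructor
  · rintro ⟨⟨h1, h2⟩, h3, h4⟩
    exact ⟨h1, h2, h3, fun j h5 h6 => h4 j ⟨h5, h6⟩⟩
  · rintro ⟨h1, h2, h3, h4⟩
    exact ⟨⟨h1, h2⟩, h3, fun j h => h4 j h.1 h.2⟩

lemma exists_last (σ : ℕ → S) (t : ℕ) (x : S) (h : ∃ s, 1 ≤ s ∧ s ≤ t ∧ σ s = x) :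
    ∃ i, 1 ≤ i ∧ i ≤ t ∧ σ i = x ∧ ∀ j, i < j → j ≤ t → σ j ≠ x := by
  let F := (Finset.Icc 1 t).filter (fun s => σ s = x)
  have hF : F.Nonempty := by
    obtain ⟨s, h1, h2, h3⟩ := h
    exact ⟨s, Finset.mem_filter.2 ⟨Finset.mem_Icc.2 ⟨h1, h2⟩, h3⟩⟩
  obtain ⟨s, hs, hmax⟩ := F.exists_max_image id hF
  obtain ⟨hs1, hs2⟩ := Finset.mem_filter.1 hs
  obtain ⟨hs3, hs4⟩ := Finset.mem_Icc.1 hs1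
  refine ⟨s, hs3, hs4, hs2, ?_⟩
  intro j h1 h2 h3
  have := hmax j (Finset.mem_filter.2 ⟨Finset.mem_Icc.2 ⟨by omega, h2⟩, h3⟩)
  simp at this; omega

lemma exists_lastIdx (R : CacheRun S k T σ) {t : ℕ} (hT : t ≤ T) {x : S} (hx : x ∈ R.C t) :
    ∃ i ∈ lastIdx R t, σ i = x := by
  obtain ⟨i, h1, h2, h3, h4⟩ := exists_last σ t x (requested R t hT hx)
  exact ⟨i, (mem_lastIdx R).2 ⟨h1, h2, h3 ▸ hx, fun j h5 h6 => h3 ▸ h4 j h5 h6⟩, h3⟩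

lemma lastIdx_inj (R : CacheRun S k T σ) {t i j : ℕ} (hi : i ∈ lastIdx R t)
    (hj : j ∈ lastIdx R t) (h : σ i = σ j) : i = j := by
  obtain ⟨a1, a2, a3, a4⟩ := (mem_lastIdx R).1 hi
  obtain ⟨b1, b2, b3, b4⟩ := (mem_lastIdx R).1 hj
  rcases lt_trichotomy i j with hlt | he | hlt
  · exact absurd h.symm (a4 j hlt b2)
  · exact he
  · exact absurd h (b4 i hlt a2)

lemma nextReq_ge {i s : ℕ} (hs : s ≤ T + 1) (h : ∀ r, i < r → r < s → σ r ≠ σ i) :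
    s ≤ nextReq σ T i := by
  unfold nextReq
  split_ifs with hex
  · by_contra hlt
    push Not at hlt
    have := Nat.find_spec hex
    exact h _ this.1 hlt this.2.2
  · exact hs

lemma nextReq_eq {i s : ℕ} (his : i < s) (hs : s ≤ T) (he : σ s = σ i)
    (h : ∀ r, i < r → r < s → σ r ≠ σ i) : nextReq σ T i = s := by
  refine le_antisymm ?_ (nextReq_ge (by omega) h)
  unfold nextReq
  have hex : ∃ s, i < s ∧ s ≤ T ∧ σ s = σ i := ⟨s, his, hs, he⟩
  rw [dif_pos hex]
  exact Nat.find_min' hex ⟨his, hs, he⟩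

/-! ### AlternatingOracle labels -/

variable {ω : ℕ → ℕ} {strat : ℕ → Fin 3}

lemma fin3_cases (a : Fin 3) : a = 0 ∨ a = 1 ∨ a = 2 := by
  fin_cases a <;> simp

lemma strat_rand {R : CacheRun S k T σ} (h : IsAlternatingOracle R ω strat) {t : ℕ}
    (he : EvictStep R t) (hs : strat t = 1) : ∃ t0, Trig R t0 t ∧ strat t0 = 0 := by
  obtain ⟨h1, h2, h3, h4⟩ := h t he
  by_cases hn : NewPage σ t
  · have := (h1 hn).1; rw [hs] at this; exact absurd this (by decide)
  · obtain ⟨t0, ht0⟩ := exists_trig R he.2.1 he.2.2.1 hn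
    have hl := ht0.lastEv strat
    refine ⟨t0, ht0, ?_⟩
    rcases fin3_cases (strat t0) with h | h | h
    · exact h
    · rw [h] at hl; have := (h3 hl).1; rw [hs] at this; exact absurd this (by decide)
    · rw [h] at hl; have := (h4 hl).1; rw [hs] at this; exact absurd this (by decide)

lemma strat_zero {R : CacheRun S k T σ} (h : IsAlternatingOracle R ω strat) {t : ℕ}
    (he : EvictStep R t) (hs : strat t = 0) : BlindChoiceAt R ω t := by
  obtain ⟨h1, h2, h3, h4⟩ := h t he
  by_cases hn : NewPage σ t
  · exact (h1 hn).2
  · obtain ⟨t0, ht0⟩ := exists_trig R he.2.1 he.2.2.1 hn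
    have hl := ht0.lastEv strat
    rcases fin3_cases (strat t0) with h | h | h
    · rw [h] at hl; have := (h2 hl); rw [hs] at this; exact absurd this (by decide)
    · rw [h] at hl; have := (h3 hl).1; rw [hs] at this; exact absurd this (by decide)
    · rw [h] at hl; exact (h4 hl).2

lemma trig_zero {R : CacheRun S k T σ} (h : IsAlternatingOracle R ω strat) {t0 t : ℕ}
    (ht : Trig R t0 t) (hs : strat t0 = 0) : strat t = 1 :=
  (h t ht.evictStep).2.1 (hs ▸ ht.lastEv strat)

lemma trig_one {R : CacheRun S k T σ} (h : IsAlternatingOracle R ω strat) {t0 t : ℕ}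
    (ht : Trig R t0 t) (hs : strat t0 = 1) : strat t = 2 ∧ CorrectorChoiceAt R ω t :=
  (h t ht.evictStep).2.2.1 (hs ▸ ht.lastEv strat)

lemma trig_two {R : CacheRun S k T σ} (h : IsAlternatingOracle R ω strat) {t0 t : ℕ}
    (ht : Trig R t0 t) (hs : strat t0 = 2) : strat t = 0 ∧ BlindChoiceAt R ω t :=
  (h t ht.evictStep).2.2.2 (hs ▸ ht.lastEv strat)

/-- The set of misses of a run. -/
noncomputable def missSet (R : CacheRun S k T σ) : Finset ℕ :=
  (Finset.Icc 1 T).filter fun t => σ t ∉ R.C (t - 1)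

lemma mem_missSet {R : CacheRun S k T σ} {t : ℕ} :
    t ∈ missSet R ↔ (1 ≤ t ∧ t ≤ T) ∧ σ t ∉ R.C (t - 1) := by
  unfold missSet; simp

lemma missSet_card (R : CacheRun S k T σ) : (missSet R).card = misses R := rfl

/-- The set of times with an eviction by RandomAlg. -/
noncomputable def randSet (R : CacheRun S k T σ) (strat : ℕ → Fin 3) : Finset ℕ :=
  (Finset.Icc 1 T).filter fun t => EvictStep R t ∧ strat t = 1

lemma mem_randSet {R : CacheRun S k T σ} {t : ℕ} :
    t ∈ randSet R strat ↔ EvictStep R t ∧ strat t = 1 := by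
  unfold randSet
  simp only [Finset.mem_filter, Finset.mem_Icc]
  exact ⟨fun h => h.2, fun h => ⟨⟨h.1.1, h.1.2.1⟩, h⟩⟩

lemma misses_le (A R : CacheRun S k T σ) (h : IsAlternatingOracle R ω strat) :
    misses R ≤ misses A + 3 * (randSet R strat).card := by
  let N := (Finset.Icc 1 T).filter (fun t => NewPage σ t)
  let M2 := (Finset.Icc 1 T).filter (fun t => ∃ t0, Trig R t0 t ∧ strat t0 = 1)
  let M0 := (Finset.Icc 1 T).filter (fun t => ∃ t0, Trig R t0 t ∧ strat t0 = 2)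
  have hsub : missSet R ⊆ N ∪ (randSet R strat ∪ (M2 ∪ M0)) := by
    intro t ht
    obtain ⟨hI, hm⟩ := mem_missSet.1 ht
    have hI' := Finset.mem_Icc.2 hI
    by_cases hn : NewPage σ t
    · exact Finset.mem_union_left _ (Finset.mem_filter.2 ⟨hI', hn⟩)
    · apply Finset.mem_union_right
      obtain ⟨t0, ht0⟩ := exists_trig R hI.2 hm hn
      rcases fin3_cases (strat t0) with h' | h' | h'
      · exact Finset.mem_union_left _ (mem_randSet.2 ⟨ht0.evictStep, trig_zero h ht0 h'⟩)
      · exact Finset.mem_union_right _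
          (Finset.mem_union_left _ (Finset.mem_filter.2 ⟨hI', t0, ht0, h'⟩))
      · exact Finset.mem_union_right _
          (Finset.mem_union_right _ (Finset.mem_filter.2 ⟨hI', t0, ht0, h'⟩))
  have hN : N.card ≤ misses A := by
    rw [← missSet_card]
    apply Finset.card_le_card
    intro t ht
    obtain ⟨h1, h2⟩ := Finset.mem_filter.1 ht
    have h1 := Finset.mem_Icc.1 h1
    exact mem_missSet.2 ⟨h1, new_miss A h1.1 h1.2 h2⟩
  have hM2 : M2.card ≤ (randSet R strat).card := by
    refine card_le_of_rel (fun t t0 => Trig R t0 t) ?_ ?_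
    · intro t ht
      obtain ⟨_, t0, h1, h2⟩ := Finset.mem_filter.1 ht
      exact ⟨t0, mem_randSet.2 ⟨h1.1, h2⟩, h1⟩
    · intro a _ b _ c h1 h2
      exact h1.right_unique h2
  have hM0 : M0.card ≤ M2.card := by
    refine card_le_of_rel (fun t t0 => Trig R t0 t) ?_ ?_
    · intro t ht
      obtain ⟨_, t0, h1, h2⟩ := Finset.mem_filter.1 ht
      refine ⟨t0, Finset.mem_filter.2 ⟨Finset.mem_Icc.2 ⟨h1.1.1, h1.1.2.1⟩, ?_⟩, h1⟩
      by_cases hn : NewPage σ t0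
      · have := ((h t0 h1.1).1 hn).1; rw [h2] at this; exact absurd this (by decide)
      · obtain ⟨t', ht'⟩ := exists_trig R h1.1.2.1 h1.1.2.2.1 hn
        refine ⟨t', ht', ?_⟩
        rcases fin3_cases (strat t') with h' | h' | h'
        · have := trig_zero h ht' h'; rw [h2] at this; exact absurd this (by decide)
        · exact h'
        · have := (trig_two h ht' h').1; rw [h2] at this; exact absurd this (by decide)
    · intro a _ b _ c h1 h2
      exact h1.right_unique h2
  have h1 := Finset.card_le_card hsub
  have h2 := Finset.card_union_le N (randSet R strat ∪ (M2 ∪ M0))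
  have h3 := Finset.card_union_le (randSet R strat) (M2 ∪ M0)
  have h4 := Finset.card_union_le M2 M0
  rw [missSet_card] at h1
  omega

end Basic

/-! ### The persistent matching -/

section Matching

variable {k T : ℕ} {σ : ℕ → S}

/-- `f` injects the pages of `A` missing in `B` into the pages of `B` missing in `A`. -/
def IsMatch (A B : CacheRun S k T σ) (t : ℕ) (f : S → S) : Prop :=
  (∀ x ∈ A.C t \ B.C t, f x ∈ B.C t \ A.C t) ∧
  (∀ x ∈ A.C t \ B.C t, ∀ y ∈ A.C t \ B.C t, f x = f y → x = y)

/-- `x` keeps (or inherits) its partner when passing from time `t` to time `t + 1`. -/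
def Unbroken (A B : CacheRun S k T σ) (t : ℕ) (f g : S → S) (x : S) : Prop :=
  (x ∈ A.C t \ B.C t ∧ g x = f x) ∨
  (EvictStep B (t + 1) ∧ x = B.p (t + 1) ∧ σ (t + 1) ∈ A.C t \ B.C t ∧ g x = f (σ (t + 1)))

/-- A time at which the matching may change. -/
def BadTime (A B : CacheRun S k T σ) (t : ℕ) : Prop :=
  σ t ∉ A.C (t - 1) ∨ (EvictStep B t ∧ B.p t ∉ A.C t)

lemma match_step (A B : CacheRun S k T σ) (t : ℕ) (hT : t + 1 ≤ T) (f : S → S)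
    (hf : IsMatch A B t f) :
    ∃ g, IsMatch A B (t + 1) g ∧
      ((A.C (t + 1) \ B.C (t + 1)).filter (fun x => ¬ Unbroken A B t f g x)).card ≤ 3 ∧
      (¬ BadTime A B (t + 1) → ∀ x ∈ A.C (t + 1) \ B.C (t + 1), Unbroken A B t f g x) := by
  obtain ⟨hf1, hf2⟩ := hf
  set r := σ (t + 1) with hr
  set i := B.p (t + 1) with hi
  set D := A.C t \ B.C t with hD
  set E := B.C t \ A.C t with hE
  set D' := A.C (t + 1) \ B.C (t + 1) with hD'
  set E' := B.C (t + 1) \ A.C (t + 1) with hE'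
  have hrA : r ∈ A.C (t + 1) := mem_self A (by omega) hT
  have hrB : r ∈ B.C (t + 1) := mem_self B (by omega) hT
  let ev : Prop := EvictStep B (t + 1)
  let g0 : S → S := fun x => if ev ∧ x = i then f r else f x
  let V := D'.filter (fun x => (x ∈ D ∨ (ev ∧ x = i ∧ r ∈ D)) ∧ g0 x ∈ E')
  have hiB : ev → i ∈ B.C t := fun h => evict_mem' h
  have hDi : ∀ x ∈ D, ev → x ≠ i := by
    intro x hx h he
    exact (Finset.mem_sdiff.1 hx).2 (he ▸ hiB h)
  have hD'r : ∀ x ∈ D', x ≠ r := fun x hx he => (Finset.mem_sdiff.1 hx).2 (he ▸ hrB)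
  have hg0D : ∀ x ∈ D, g0 x = f x := by
    intro x hx
    have : ¬ (ev ∧ x = i) := fun h => hDi x hx h.1 h.2
    simp only [g0, this, if_false]
  have hg0i : ∀ x, ev → x = i → g0 x = f r := by
    intro x h1 h2
    simp only [g0, h1, h2, and_self, if_true]
  have hVinj : ∀ x ∈ V, ∀ y ∈ V, g0 x = g0 y → x = y := by
    intro x hx y hy hxy
    obtain ⟨hx1, hx2, -⟩ := Finset.mem_filter.1 hx
    obtain ⟨hy1, hy2, -⟩ := Finset.mem_filter.1 hy
    rcases hx2 with hx2 | ⟨e1, e2, e3⟩ <;> rcases hy2 with hy2 | ⟨f1, f2, f3⟩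
    · rw [hg0D x hx2, hg0D y hy2] at hxy
      exact hf2 x hx2 y hy2 hxy
    · rw [hg0D x hx2, hg0i y f1 f2] at hxy
      exact absurd (hf2 x hx2 r f3 hxy) (hD'r x hx1)
    · rw [hg0D y hy2, hg0i x e1 e2] at hxy
      exact absurd (hf2 r e3 y hy2 hxy).symm (hD'r y hy1)
    · rw [e2, f2]
  have hVmap : ∀ x ∈ V, g0 x ∈ E' := fun x hx => (Finset.mem_filter.1 hx).2.2
  have hVD : V ∪ D' = D' := Finset.union_eq_right.2 (Finset.filter_subset _ _)
  obtain ⟨g, hg1, hg2, hg3⟩ := exists_inj_extend V E' g0 hVinj hVmap D'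
    (by rw [hVD]; exact card_DE A B (t + 1) hT)
  rw [hVD] at hg2 hg3
  have hunb : ∀ x ∈ V, Unbroken A B t f g x := by
    intro x hx
    obtain ⟨hx1, hx2, -⟩ := Finset.mem_filter.1 hx
    rcases hx2 with hx2 | ⟨e1, e2, e3⟩
    · exact Or.inl ⟨hx2, by rw [hg1 x hx, hg0D x hx2]⟩
    · exact Or.inr ⟨e1, e2, e3, by rw [hg1 x hx, hg0i x e1 e2]⟩
  have hcls : ∀ x ∈ D', x ∈ D ∨ (ev ∧ x = i) := by
    intro x hx
    obtain ⟨h1, h2⟩ := Finset.mem_sdiff.1 hx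
    have h3 : x ∈ A.C t := by
      rcases step_sub A (by omega) hT h1 with h | h
      · exact absurd h (hD'r x hx)
      · simpa using h
    by_cases h4 : x ∈ B.C t
    · right
      exact step_drop B (t := t + 1) (by omega) hT (by simpa using h4) h2
    · left
      exact Finset.mem_sdiff.2 ⟨h3, h4⟩
  refine ⟨g, ⟨hg2, hg3⟩, ?_, ?_⟩
  · have hsub : D'.filter (fun x => ¬ Unbroken A B t f g x) ⊆
        {i} ∪ (D.filter (fun x => f x = i) ∪ D.filter (fun x => f x = r)) := by
      intro x hx
      obtain ⟨hx1, hx2⟩ := Finset.mem_filter.1 hx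
      have hxV : x ∉ V := fun h => hx2 (hunb x h)
      rcases hcls x hx1 with h | ⟨_, h⟩
      · apply Finset.mem_union_right
        have hnE : f x ∉ E' := by
          intro hc
          exact hxV (Finset.mem_filter.2 ⟨hx1, Or.inl h, by rw [hg0D x h]; exact hc⟩)
        obtain ⟨h1, h2⟩ := Finset.mem_sdiff.1 (hf1 x h)
        by_cases h3 : f x ∈ B.C (t + 1)
        · have h4 : f x ∈ A.C (t + 1) := by
            by_contra hc
            exact hnE (Finset.mem_sdiff.2 ⟨h3, hc⟩)
          rcases step_sub A (by omega) hT h4 with h5 | h5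
          · exact Finset.mem_union_right _ (Finset.mem_filter.2 ⟨h, h5⟩)
          · exact absurd h5 (by simpa using h2)
        · have := step_drop B (t := t + 1) (by omega) hT (by simpa using h1) h3
          exact Finset.mem_union_left _ (Finset.mem_filter.2 ⟨h, this.2⟩)
      · exact Finset.mem_union_left _ (by simp [h])
    have hone : ∀ z, (D.filter (fun x => f x = z)).card ≤ 1 := by
      intro z
      apply Finset.card_le_one.2
      intro a ha b hb
      obtain ⟨a1, a2⟩ := Finset.mem_filter.1 ha
      obtain ⟨b1, b2⟩ := Finset.mem_filter.1 hb
      exact hf2 a a1 b b1 (a2.trans b2.symm)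
    have h1 := Finset.card_le_card hsub
    have h2 := Finset.card_union_le {i} (D.filter (fun x => f x = i) ∪ D.filter (fun x => f x = r))
    have h3 := Finset.card_union_le (D.filter (fun x => f x = i)) (D.filter (fun x => f x = r))
    have h4 := hone i
    have h5 := hone r
    rw [Finset.card_singleton] at h2
    omega
  · intro hbad x hx
    apply hunb
    unfold BadTime at hbad
    push Not at hbad
    obtain ⟨hb1, hb2⟩ := hbad
    have hb1 : r ∈ A.C t := hb1
    have hAC : A.C (t + 1) = A.C t := by
      rw [A.hit (t + 1) (by omega) hT (Or.inl hb1)]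
      exact Finset.insert_eq_of_mem hb1
    -- `E` does not lose elements
    have hEE : ∀ y ∈ E, y ∈ E' := by
      intro y hy
      obtain ⟨h1, h2⟩ := Finset.mem_sdiff.1 hy
      refine Finset.mem_sdiff.2 ⟨?_, by rw [hAC]; exact h2⟩
      by_contra h3
      obtain ⟨h4, h5⟩ := step_drop B (t := t + 1) (by omega) hT (by simpa using h1) h3
      have := hb2 h4
      rw [hAC, ← h5] at this
      exact h2 this
    rcases hcls x hx with h | ⟨h, h'⟩
    · exact Finset.mem_filter.2 ⟨hx, Or.inl h, by rw [hg0D x h]; exact hEE _ (hf1 x h)⟩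
    · have hrD : r ∈ D := by
        have : r ∉ B.C t := h.2.2.1
        exact Finset.mem_sdiff.2 ⟨hb1, this⟩
      exact Finset.mem_filter.2 ⟨hx, Or.inr ⟨h, h', hrD⟩, by
        rw [hg0i x h h']; exact hEE _ (hf1 r hrD)⟩

lemma exists_matching (A B : CacheRun S k T σ) :
    ∃ F : ℕ → S → S, (∀ t, t ≤ T → IsMatch A B t (F t)) ∧
      ∀ t, t + 1 ≤ T →
        ((A.C (t + 1) \ B.C (t + 1)).filter
          (fun x => ¬ Unbroken A B t (F t) (F (t + 1)) x)).card ≤ 3 ∧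
        (¬ BadTime A B (t + 1) →
          ∀ x ∈ A.C (t + 1) \ B.C (t + 1), Unbroken A B t (F t) (F (t + 1)) x) := by
  obtain ⟨F, hF⟩ := exists_seq (α := S → S) (fun t f => t ≤ T → IsMatch A B t f)
    (fun t f g => t + 1 ≤ T →
        ((A.C (t + 1) \ B.C (t + 1)).filter (fun x => ¬ Unbroken A B t f g x)).card ≤ 3 ∧
        (¬ BadTime A B (t + 1) → ∀ x ∈ A.C (t + 1) \ B.C (t + 1), Unbroken A B t f g x))
    ⟨id, fun _ => by simp [IsMatch, A.init]⟩
    (by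
      intro t f hf
      by_cases hT : t + 1 ≤ T
      · obtain ⟨g, h1, h2⟩ := match_step A B t hT f (hf (by omega))
        exact ⟨g, fun _ => h1, fun _ => h2⟩
      · exact ⟨f, fun h => absurd h hT, fun h => absurd h hT⟩)
  exact ⟨F, fun t => (hF t).1, fun t => (hF t).2⟩

/-! ### Counting -/

/-- Evictions of pages that are never requested again. -/
noncomputable def neverSet (B : CacheRun S k T σ) : Finset ℕ :=
  (Finset.Icc 1 T).filter fun t => EvictStep B t ∧ ∀ s, t < s → s ≤ T → σ s ≠ B.p t

lemma exists_trig_of_req {B : CacheRun S k T σ} {t : ℕ} (he : EvictStep B t)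
    (h : ∃ s, t < s ∧ s ≤ T ∧ σ s = B.p t) : ∃ s, Trig B t s := by
  have h1 := Nat.find_spec h
  refine ⟨Nat.find h, he, h1.1, h1.2.1, h1.2.2.symm, ?_⟩
  intro r h2 h3 h4
  exact Nat.find_min h h3 ⟨h2, by omega, h4⟩

lemma exists_first (σ : ℕ → S) (t : ℕ) (h1 : 1 ≤ t) :
    ∃ s, 1 ≤ s ∧ s ≤ t ∧ σ s = σ t ∧ NewPage σ s := by
  have hex : ∃ s, 1 ≤ s ∧ s ≤ t ∧ σ s = σ t := ⟨t, h1, le_rfl, rfl⟩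
  obtain ⟨h2, h3, h4⟩ := Nat.find_spec hex
  refine ⟨Nat.find hex, h2, h3, h4, ?_⟩
  intro r h5 h6 h7
  exact Nat.find_min hex h6 ⟨h5, by omega, h7.trans h4⟩

lemma neverSet_card (A B : CacheRun S k T σ) : (neverSet B).card ≤ misses A := by
  rw [← missSet_card]
  refine card_le_of_rel (fun t s => σ s = B.p t) ?_ ?_
  · intro t ht
    obtain ⟨hI, he, hn⟩ := Finset.mem_filter.1 ht
    have hI := Finset.mem_Icc.1 hI
    obtain ⟨s, h1, h2, h3⟩ := requested B (t - 1) (by omega) (evict_mem' he)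
    obtain ⟨s', h4, h5, h6, h7⟩ := exists_first σ s h1
    exact ⟨s', mem_missSet.2 ⟨⟨h4, by omega⟩, new_miss A h4 (by omega) h7⟩, h6.trans h3⟩
  · intro a ha b hb s h1 h2
    obtain ⟨hI, he, hn⟩ := Finset.mem_filter.1 ha
    obtain ⟨hI', he', hnb⟩ := Finset.mem_filter.1 hb
    exact evict_uniq (τ := T) he he' (h1.symm.trans h2) he.2.1 he'.2.1 hn hnb

/-- If `A` does not have a page evicted by `B` at some time before its next request, then `A`
misses at that request. -/
lemma Trig.missA (A : CacheRun S k T σ) {B : CacheRun S k T σ} {t0 t τ : ℕ} (h : Trig B t0 t)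
    (h1 : t0 ≤ τ) (h2 : τ < t) (h3 : B.p t0 ∉ A.C τ) : t ∈ missSet A := by
  obtain ⟨a1, a2, a3, a4, a5⟩ := h
  refine mem_missSet.2 ⟨⟨by omega, a3⟩, ?_⟩
  rw [← a4]
  exact stay_out A h3 (t - 1) (by omega) (by omega) (fun s h4 h5 => a5 s (by omega) (by omega))

noncomputable def badSet (A B : CacheRun S k T σ) : Finset ℕ :=
  (Finset.Icc 1 T).filter fun t => BadTime A B t

lemma badSet_card (A B : CacheRun S k T σ) : (badSet A B).card ≤ 3 * misses A := by
  let X := (Finset.Icc 1 T).filter (fun t => ∃ s ∈ missSet A, Trig B t s)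
  have hX : X.card ≤ misses A := by
    rw [← missSet_card]
    refine card_le_of_rel (fun t s => Trig B t s) ?_ ?_
    · intro t ht
      exact (Finset.mem_filter.1 ht).2
    · intro a _ b _ s h1 h2
      exact h1.inj h2
  have hsub : badSet A B ⊆ missSet A ∪ (neverSet B ∪ X) := by
    intro t ht
    obtain ⟨hI, hb⟩ := Finset.mem_filter.1 ht
    rcases hb with hb | ⟨he, hp⟩
    · exact Finset.mem_union_left _ (mem_missSet.2 ⟨Finset.mem_Icc.1 hI, hb⟩)
    · apply Finset.mem_union_right
      by_cases h : ∃ s, t < s ∧ s ≤ T ∧ σ s = B.p t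
      · apply Finset.mem_union_right
        obtain ⟨s, hs⟩ := exists_trig_of_req he h
        exact Finset.mem_filter.2 ⟨hI, s, hs.missA A le_rfl hs.2.1 hp, hs⟩
      · push Not at h
        exact Finset.mem_union_left _ (Finset.mem_filter.2 ⟨hI, he, h⟩)
  have h1 := Finset.card_le_card hsub
  have h2 := Finset.card_union_le (missSet A) (neverSet B ∪ X)
  have h3 := Finset.card_union_le (neverSet B) X
  have h4 := neverSet_card A B
  rw [missSet_card] at h2
  omega

/-- The indices whose page is evicted by `A` before its next request. -/
def LostIdx (A : CacheRun S k T σ) (l : ℕ) : Prop :=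
  ∃ e, l < e ∧ e ≤ T ∧ EvictStep A e ∧ A.p e = σ l ∧ ∀ r, l < r → r ≤ e → σ r ≠ σ l

noncomputable def lostSet (A : CacheRun S k T σ) : Finset ℕ :=
  (Finset.Icc 1 T).filter fun l => LostIdx A l

lemma lostSet_card (A : CacheRun S k T σ) : (lostSet A).card ≤ misses A := by
  rw [← missSet_card]
  refine card_le_of_rel (fun l e => l < e ∧ e ≤ T ∧ EvictStep A e ∧ A.p e = σ l ∧
    ∀ r, l < r → r ≤ e → σ r ≠ σ l) ?_ ?_
  · intro l hl
    obtain ⟨_, e, he⟩ := Finset.mem_filter.1 hl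
    exact ⟨e, mem_missSet.2 ⟨⟨he.2.2.1.1, he.2.1⟩, he.2.2.1.2.2.1⟩, he⟩
  · rintro a _ b _ e ⟨a1, a2, a3, a4, a5⟩ ⟨b1, b2, b3, b4, b5⟩
    rcases lt_trichotomy a b with h | h | h
    · exact absurd (b4.symm.trans a4) (a5 b h b1.le)
    · exact h
    · exact absurd (a4.symm.trans b4) (b5 a h a1.le)

lemma lost_of (A : CacheRun S k T σ) {l t : ℕ} (h1 : 1 ≤ l) (hlt : l ≤ t) (hT : t ≤ T)
    (hr : ∀ r, l < r → r ≤ t → σ r ≠ σ l) (hn : σ l ∉ A.C t) : l ∈ lostSet A := by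
  refine Finset.mem_filter.2 ⟨Finset.mem_Icc.2 ⟨h1, by omega⟩, ?_⟩
  induction t, hlt using Nat.le_induction with
  | base => exact absurd (mem_self A h1 hT) hn
  | succ t hlt ih =>
    by_cases h : σ l ∈ A.C t
    · obtain ⟨h2, h3⟩ := step_drop A (t := t + 1) (by omega) hT (by simpa using h) hn
      exact ⟨t + 1, by omega, hT, h2, h3.symm, hr⟩
    · exact ih (by omega) (fun r h2 h3 => hr r h2 (by omega)) h

end Matching

/-! ### The deterministic bound on the number of long random evictions -/

section Long

variable {k T : ℕ} {σ : ℕ → S} {ω : ℕ → ℕ} {strat : ℕ → Fin 3}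

/-- The page evicted at `t` returns within `h` steps. -/
def ShortReturn (R : CacheRun S k T σ) (h t : ℕ) : Prop :=
  ∃ s, t < s ∧ s ≤ T ∧ s ≤ t + h ∧ σ s = R.p t

noncomputable def longSet (R : CacheRun S k T σ) (strat : ℕ → Fin 3) (h : ℕ) : Finset ℕ :=
  (randSet R strat).filter fun t => ¬ ShortReturn R h t

lemma track (A B : CacheRun S k T σ) (F : ℕ → S → S) (x : S) (a b : ℕ) (hab : a ≤ b)
    (hD : ∀ τ, a ≤ τ → τ ≤ b → x ∈ A.C τ \ B.C τ)
    (hU : ∀ τ, a ≤ τ → τ < b → Unbroken A B τ (F τ) (F (τ + 1)) x) : F b x = F a x := by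
  induction b, hab using Nat.le_induction with
  | base => rfl
  | succ b hab ih =>
    rw [← ih (fun τ h1 h2 => hD τ h1 (by omega)) (fun τ h1 h2 => hU τ h1 (by omega))]
    rcases hU b hab (by omega) with h | ⟨h1, h2, -⟩
    · exact h.2
    · have h3 := hD b hab (by omega)
      exact absurd (h2 ▸ evict_mem' h1) (Finset.mem_sdiff.1 h3).2

lemma evict_idx_uniq {R : CacheRun S k T σ} {i a b : ℕ} (ha : EvictStep R a) (hb : EvictStep R b)
    (hia : i ∈ lastIdx R (a - 1)) (hib : i ∈ lastIdx R (b - 1)) (hpa : R.p a = σ i)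
    (hpb : R.p b = σ i) : a = b := by
  have key : ∀ a b, EvictStep R a → EvictStep R b → i ∈ lastIdx R (a - 1) →
      i ∈ lastIdx R (b - 1) → R.p a = σ i → R.p b = σ i → ¬ a < b := by
    intro a b ha hb hia hib hpa hpb hlt
    obtain ⟨a1, a2, a3, a4⟩ := (mem_lastIdx R).1 hia
    obtain ⟨b1, b2, b3, b4⟩ := (mem_lastIdx R).1 hib
    have hbT := hb.2.1
    have h1 := evict_notMem ha
    rw [hpa] at h1
    exact stay_out R h1 (b - 1) (by omega) (by omega)
      (fun s h2 h3 => b4 s (by omega) h3) b3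
  have h1 := key a b ha hb hia hib hpa hpb
  have h2 := key b a hb ha hib hia hpb hpa
  omega

/-- The triple `t0, t1, t2` of consecutive evictions has the fixed better candidate `l`. -/
def Witness (A B : CacheRun S k T σ) (F : ℕ → S → S) (strat : ℕ → Fin 3)
    (t0 t1 t2 l : ℕ) : Prop :=
  Trig B t0 t1 ∧ strat t0 = 0 ∧ Trig B t1 t2 ∧ l ∈ lostSet A ∧ l ∈ lastIdx B (t0 - 1) ∧
  l ∈ lastIdx B (t2 - 1) ∧
  ∀ τ, t1 ≤ τ → τ < t2 → F τ (B.p t1) = σ l ∧ B.p t1 ∈ A.C τ \ B.C τ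

lemma exists_witness (A B : CacheRun S k T σ) (F : ℕ → S → S)
    (hF : ∀ t, t ≤ T → IsMatch A B t (F t)) {t0 t1 t2 : ℕ} (h01 : Trig B t0 t1)
    (h12 : Trig B t1 t2) (hs : strat t0 = 0) (hm1 : t1 ∉ missSet A) (hm2 : t2 ∉ missSet A)
    (hu0 : ∀ τ, t0 ≤ τ → τ + 1 < t1 → Unbroken A B τ (F τ) (F (τ + 1)) (B.p t0))
    (hu1 : ∀ τ, t1 ≤ τ + 1 → τ + 1 < t2 → Unbroken A B τ (F τ) (F (τ + 1)) (B.p t1)) :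
    ∃ l, Witness A B F strat t0 t1 t2 l := by
  have e0 := h01.1
  have e1 := h12.1
  have l01 := h01.2.1
  have l12 := h12.2.1
  have lT := h12.2.2.1
  have hD0 : ∀ τ, t0 ≤ τ → τ < t1 → B.p t0 ∈ A.C τ \ B.C τ := by
    intro τ h1 h2
    refine Finset.mem_sdiff.2 ⟨?_, h01.notMem h1 h2⟩
    by_contra hc
    exact hm1 (h01.missA A h1 h2 hc)
  have hD1 : ∀ τ, t1 ≤ τ → τ < t2 → B.p t1 ∈ A.C τ \ B.C τ := by
    intro τ h1 h2
    refine Finset.mem_sdiff.2 ⟨?_, h12.notMem h1 h2⟩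
    by_contra hc
    exact hm2 (h12.missA A h1 h2 hc)
  have hq0 : ∀ τ, t0 ≤ τ → τ < t1 → F τ (B.p t0) = F t0 (B.p t0) := by
    intro τ h1 h2
    exact track A B F _ t0 τ h1 (fun τ' h3 h4 => hD0 τ' h3 (by omega))
      (fun τ' h3 h4 => hu0 τ' h3 (by omega))
  set q := F t0 (B.p t0) with hq
  have hinh : F t1 (B.p t1) = q := by
    have h := hu1 (t1 - 1) (by omega) (by omega)
    have ht : t1 - 1 + 1 = t1 := by omega
    unfold Unbroken at h
    rw [ht] at h
    rcases h with h | ⟨_, _, _, h⟩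
    · exact absurd (evict_mem' e1) (Finset.mem_sdiff.1 h.1).2
    · rw [h, ← h01.2.2.2.1]
      exact hq0 (t1 - 1) (by omega) (by omega)
  have hq1 : ∀ τ, t1 ≤ τ → τ < t2 → F τ (B.p t1) = q := by
    intro τ h1 h2
    rw [← hinh]
    exact track A B F _ t1 τ h1 (fun τ' h3 h4 => hD1 τ' h3 (by omega))
      (fun τ' h3 h4 => hu1 τ' (by omega) (by omega))
  have hqE : ∀ τ, t0 ≤ τ → τ < t2 → q ∈ B.C τ ∧ q ∉ A.C τ := by
    intro τ h1 h2
    rcases Nat.lt_or_ge τ t1 with h3 | h3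
    · have := (hF τ (by omega)).1 _ (hD0 τ h1 h3)
      rw [hq0 τ h1 h3] at this
      exact Finset.mem_sdiff.1 this
    · have := (hF τ (by omega)).1 _ (hD1 τ h3 h2)
      rw [hq1 τ h3 h2] at this
      exact Finset.mem_sdiff.1 this
  have h0pos := e0.1
  have hqr : ∀ τ, t0 ≤ τ → τ < t2 → σ τ ≠ q := by
    intro τ h1 h2 h3
    exact (hqE τ h1 h2).2 (h3 ▸ mem_self A (by omega) (by omega))
  have hqB : q ∈ B.C (t0 - 1) := by
    rcases step_sub B e0.1 e0.2.1 (hqE t0 le_rfl (by omega)).1 with h | h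
    · exact absurd h.symm (hqr t0 le_rfl (by omega))
    · exact h
  obtain ⟨l, hl, hlq⟩ := exists_lastIdx B (by omega) hqB
  obtain ⟨a1, a2, a3, a4⟩ := (mem_lastIdx B).1 hl
  have hlr : ∀ r, l < r → r < t2 → σ r ≠ σ l := by
    intro r h1 h2
    rcases Nat.lt_or_ge r t0 with h3 | h3
    · exact a4 r h1 (by omega)
    · rw [hlq]; exact hqr r h3 h2
  refine ⟨l, h01, hs, h12, ?_, hl, ?_, ?_⟩
  · exact lost_of A a1 (t := t0) (by omega) (by omega) (fun r h1 h2 => hlr r h1 (by omega))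
      (hlq ▸ (hqE t0 le_rfl (by omega)).2)
  · exact (mem_lastIdx B).2 ⟨a1, by omega, hlq ▸ (hqE (t2 - 1) (by omega) (by omega)).1,
      fun j h1 h2 => hlr j h1 (by omega)⟩
  · intro τ h1 h2
    exact ⟨by rw [hlq]; exact hq1 τ h1 h2, hD1 τ h1 h2⟩

/-- Indices with large prediction error. -/
noncomputable def errSet (σ : ℕ → S) (T : ℕ) (ω : ℕ → ℕ) (W : ℕ) : Finset ℕ :=
  (Finset.Icc 1 T).filter fun i => W < Nat.dist (nextReq σ T i) (ω i)

lemma errSet_card (σ : ℕ → S) (T : ℕ) (ω : ℕ → ℕ) (W : ℕ) :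
    (errSet σ T ω W).card * (W + 1) ≤ totalLoss σ T ω := by
  unfold totalLoss
  calc (errSet σ T ω W).card * (W + 1) = ∑ i ∈ errSet σ T ω W, (W + 1) := by
        rw [Finset.sum_const, smul_eq_mul]
    _ ≤ ∑ i ∈ errSet σ T ω W, Nat.dist (nextReq σ T i) (ω i) :=
        Finset.sum_le_sum (fun i hi => (Finset.mem_filter.1 hi).2)
    _ ≤ _ := Finset.sum_le_sum_of_subset (Finset.filter_subset _ _)

lemma long_bound (A B : CacheRun S k T σ) (hB : IsAlternatingOracle B ω strat) (h W : ℕ) :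
    ∃ fr nf : ℕ, (longSet B strat h).card ≤ 12 * misses A + fr + nf ∧
      fr * (h + 1) ≤ misses A * (2 * W + 1) ∧ nf * (W + 1) ≤ 2 * totalLoss σ T ω := by
  obtain ⟨F, hF, hFs⟩ := exists_matching A B
  let L := longSet B strat h
  let brk : ℕ → Finset S := fun t => (A.C (t + 1) \ B.C (t + 1)).filter
          (fun x => ¬ Unbroken A B t (F t) (F (t + 1)) x)
  let Brk := (Finset.range T).sigma brk
  let Y2 := L.filter (fun t => ∃ s ∈ missSet A, Trig B t s)
  let rel : ℕ → (Σ _ : ℕ, S) → Prop := fun t1 b => ∃ t0 t2, Trig B t0 t1 ∧ strat t0 = 0 ∧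
    Trig B t1 t2 ∧ ((t0 ≤ b.1 ∧ b.1 + 1 < t1 ∧ b.2 = B.p t0) ∨
      (t1 ≤ b.1 + 1 ∧ b.1 + 1 < t2 ∧ b.2 = B.p t1))
  let Y4 := L.filter (fun t => ∃ b ∈ Brk, rel t b)
  let Fr := L.filter (fun t1 => ∃ t0 t2 l, Witness A B F strat t0 t1 t2 l ∧
    ω l ≤ t1 + W ∧ t2 ≤ ω l + W)
  let N0 := L.filter (fun t1 => ∃ i ∈ errSet σ T ω W, nextReq σ T i = t1)
  let N2 := L.filter (fun t1 => ∃ i ∈ errSet σ T ω W, ∃ t2, Trig B t1 t2 ∧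
    i ∈ lastIdx B (t2 - 1) ∧ B.p t2 = σ i)
  have hL : ∀ t ∈ L, (EvictStep B t ∧ strat t = 1) ∧ ¬ ShortReturn B h t := by
    intro t ht
    obtain ⟨h1, h2⟩ := Finset.mem_filter.1 ht
    exact ⟨mem_randSet.1 h1, h2⟩
  have hsub : L ⊆ missSet A ∪ (neverSet B ∪ (Y2 ∪ (Y4 ∪ (Fr ∪ (N0 ∪ N2))))) := by
    intro t1 ht1
    obtain ⟨⟨he1, hs1⟩, hlong⟩ := hL t1 ht1
    by_cases hm1 : t1 ∈ missSet A
    · exact Finset.mem_union_left _ hm1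
    apply Finset.mem_union_right
    by_cases hnev : t1 ∈ neverSet B
    · exact Finset.mem_union_left _ hnev
    apply Finset.mem_union_right
    by_cases hY2 : t1 ∈ Y2
    · exact Finset.mem_union_left _ hY2
    apply Finset.mem_union_right
    by_cases hY4 : t1 ∈ Y4
    · exact Finset.mem_union_left _ hY4
    apply Finset.mem_union_right
    obtain ⟨t0, h01, hs0⟩ := strat_rand hB he1 hs1
    obtain ⟨t2, h12⟩ : ∃ t2, Trig B t1 t2 := by
      apply exists_trig_of_req he1
      by_contra hc
      push Not at hc
      exact hnev (Finset.mem_filter.2 ⟨Finset.mem_Icc.2 ⟨he1.1, he1.2.1⟩, he1, hc⟩)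
    have hm2 : t2 ∉ missSet A := fun hc => hY2 (Finset.mem_filter.2 ⟨ht1, t2, hc, h12⟩)
    have lT := h12.2.2.1
    have l12 := h12.2.1
    have l01 := h01.2.1
    have hnb : ∀ b, rel t1 b → b ∉ Brk := fun b h1 h2 => hY4 (Finset.mem_filter.2 ⟨ht1, b, h2, h1⟩)
    have hu0 : ∀ τ, t0 ≤ τ → τ + 1 < t1 → Unbroken A B τ (F τ) (F (τ + 1)) (B.p t0) := by
      intro τ h1 h2
      by_contra hc
      refine hnb ⟨τ, B.p t0⟩ ⟨t0, t2, h01, hs0, h12, Or.inl ⟨h1, h2, rfl⟩⟩ ?_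
      refine Finset.mem_sigma.2 ⟨Finset.mem_range.2 (by show τ < T; omega), ?_⟩
      refine Finset.mem_filter.2 ⟨Finset.mem_sdiff.2 ⟨?_, h01.notMem (by show t0 ≤ τ + 1; omega) h2⟩, hc⟩
      by_contra hc2
      exact hm1 (h01.missA A (by show t0 ≤ τ + 1; omega) h2 hc2)
    have hu1 : ∀ τ, t1 ≤ τ + 1 → τ + 1 < t2 → Unbroken A B τ (F τ) (F (τ + 1)) (B.p t1) := by
      intro τ h1 h2
      by_contra hc
      refine hnb ⟨τ, B.p t1⟩ ⟨t0, t2, h01, hs0, h12, Or.inr ⟨h1, h2, rfl⟩⟩ ?_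
      refine Finset.mem_sigma.2 ⟨Finset.mem_range.2 (by show τ < T; omega), ?_⟩
      refine Finset.mem_filter.2 ⟨Finset.mem_sdiff.2 ⟨?_, h12.notMem h1 h2⟩, hc⟩
      by_contra hc2
      exact hm2 (h12.missA A h1 h2 hc2)
    obtain ⟨l, hw⟩ := exists_witness (strat := strat) A B F hF h01 h12 hs0 hm1 hm2 hu0 hu1
    by_cases hc1 : ω l ≤ t1 + W
    · by_cases hc2 : t2 ≤ ω l + W
      · exact Finset.mem_union_left _ (Finset.mem_filter.2 ⟨ht1, t0, t2, l, hw, hc1, hc2⟩)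
      · apply Finset.mem_union_right
        apply Finset.mem_union_right
        have he2 := h12.evictStep
        obtain ⟨i, hi, hip⟩ := exists_lastIdx B (t := t2 - 1) (by omega) (evict_mem' he2)
        have hl2 := hw.2.2.2.2.2.1
        have hcor := (trig_one hB h12 hs1).2.1 ⟨l, hl2, by omega⟩ i hi hip.symm
        have hle := hcor.2 l hl2 (by omega)
        obtain ⟨b1, b2, b3, b4⟩ := (mem_lastIdx B).1 hi
        have hν : t2 ≤ nextReq σ T i := nextReq_ge (by omega) (fun r h1 h2 => b4 r h1 (by omega))
        refine Finset.mem_filter.2 ⟨ht1, i, Finset.mem_filter.2 ⟨Finset.mem_Icc.2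
          ⟨b1, by omega⟩, ?_⟩, t2, h12, hi, hip.symm⟩
        unfold Nat.dist
        omega
    · apply Finset.mem_union_right
      apply Finset.mem_union_left
      have he0 := h01.1
      have h0T := he0.2.1
      obtain ⟨i, hi, hip⟩ := exists_lastIdx B (t := t0 - 1) (by omega) (evict_mem' he0)
      have hle := strat_zero hB he0 hs0 i hi hip.symm l hw.2.2.2.2.1
      obtain ⟨b1, b2, b3, b4⟩ := (mem_lastIdx B).1 hi
      have hν : nextReq σ T i = t1 := by
        refine nextReq_eq (by omega) (by omega) (by rw [hip]; exact h01.2.2.2.1.symm) ?_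
        intro r h1 h2
        rcases lt_trichotomy r t0 with h3 | h3 | h3
        · exact b4 r h1 (by omega)
        · rw [h3, hip]; exact (evict_ne he0).symm
        · rw [hip]; exact h01.2.2.2.2 r h3 h2
      refine Finset.mem_filter.2 ⟨ht1, i, Finset.mem_filter.2 ⟨Finset.mem_Icc.2
          ⟨b1, by omega⟩, ?_⟩, hν⟩
      rw [hν]
      unfold Nat.dist
      omega
  have hY2 : Y2.card ≤ misses A := by
    rw [← missSet_card]
    refine card_le_of_rel (fun t s => Trig B t s) (fun t ht => (Finset.mem_filter.1 ht).2) ?_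
    intro a _ b _ s h1 h2
    exact h1.inj h2
  have hBrk : Brk.card ≤ 9 * misses A := by
    have h1 : Brk.card ≤ 3 * ((Finset.range T).filter (fun t => BadTime A B (t + 1))).card := by
      rw [Finset.card_sigma, Finset.card_filter, Finset.mul_sum]
      apply Finset.sum_le_sum
      intro t ht
      have ht := Finset.mem_range.1 ht
      obtain ⟨h2, h3⟩ := hFs t (by omega)
      split_ifs with hb
      · exact h2
      · have : brk t = ∅ := Finset.filter_eq_empty_iff.2 (fun x hx => not_not.2 (h3 hb x hx))
        rw [this]; simp
    have h2 : ((Finset.range T).filter (fun t => BadTime A B (t + 1))).card ≤ (badSet A B).card := by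
      refine card_le_of_rel (fun t s => s = t + 1) ?_ ?_
      · intro t ht
        obtain ⟨h3, h4⟩ := Finset.mem_filter.1 ht
        have h3 := Finset.mem_range.1 h3
        exact ⟨t + 1, Finset.mem_filter.2 ⟨Finset.mem_Icc.2 ⟨by omega, by omega⟩, h4⟩, rfl⟩
      · intro a _ b _ s h3 h4
        omega
    have h3 := badSet_card A B
    omega
  have hY4 : Y4.card ≤ Brk.card := by
    refine card_le_of_rel rel (fun t ht => (Finset.mem_filter.1 ht).2) ?_
    rintro a ha b hb ⟨τ, x⟩ ⟨a0, a2, p1, p2, p3, p4⟩ ⟨b0, b2, q1, q2, q3, q4⟩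
    have sa := (hL a (Finset.mem_filter.1 ha).1).1.2
    have sb := (hL b (Finset.mem_filter.1 hb).1).1.2
    have key : ∀ c d c' d', Trig B c d → Trig B c' d' → c ≤ τ + 1 → τ + 1 < d → c' ≤ τ + 1 →
        τ + 1 < d' → B.p c = B.p c' → c = c' := by
      intro c d c' d' h1 h2 h3 h4 h5 h6 h7
      exact evict_uniq (τ := τ + 1) h1.1 h2.1 h7 h3 h5
        (fun s h8 h9 => h1.2.2.2.2 s h8 (by omega)) (fun s h8 h9 => h2.2.2.2.2 s h8 (by omega))
    simp only at p4 q4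
    rcases p4 with ⟨p4, p5, p6⟩ | ⟨p4, p5, p6⟩ <;> rcases q4 with ⟨q4, q5, q6⟩ | ⟨q4, q5, q6⟩
    · have := key a0 a b0 b p1 q1 (by omega) p5 (by omega) q5 (p6.symm.trans q6)
      subst this
      exact p1.right_unique q1
    · have := key a0 a b b2 p1 q3 (by omega) p5 (by omega) q5 (p6.symm.trans q6)
      rw [← this, p2] at sb
      exact absurd sb (by decide)
    · have := key a a2 b0 b p3 q1 (by omega) p5 (by omega) q5 (p6.symm.trans q6)
      rw [this, q2] at sa
      exact absurd sa (by decide)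
    · exact key a a2 b b2 p3 q3 (by omega) p5 (by omega) q5 (p6.symm.trans q6)
  have hN0 : N0.card ≤ (errSet σ T ω W).card := by
    refine card_le_of_rel (fun t i => nextReq σ T i = t)
      (fun t ht => (Finset.mem_filter.1 ht).2) ?_
    intro a _ b _ i h1 h2
    exact h1.symm.trans h2
  have hN2 : N2.card ≤ (errSet σ T ω W).card := by
    refine card_le_of_rel (fun t1 i => ∃ t2, Trig B t1 t2 ∧
      i ∈ lastIdx B (t2 - 1) ∧ B.p t2 = σ i) (fun t ht => (Finset.mem_filter.1 ht).2) ?_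
    rintro a _ b _ i ⟨a2, p1, p2, p3⟩ ⟨b2, q1, q2, q3⟩
    have := evict_idx_uniq p1.evictStep q1.evictStep p2 q2 p3 q3
    subst this
    exact p1.inj q1
  have hFr : Fr.card * (h + 1) ≤ misses A * (2 * W + 1) := by
    let Z := (lostSet A).sigma (fun l => Finset.Icc (ω l - W) (ω l + W))
    have hZ : Z.card ≤ misses A * (2 * W + 1) := by
      rw [Finset.card_sigma]
      calc ∑ l ∈ lostSet A, (Finset.Icc (ω l - W) (ω l + W)).card
          ≤ ∑ l ∈ lostSet A, (2 * W + 1) := by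
            apply Finset.sum_le_sum
            intro l _
            rw [Nat.card_Icc]; omega
        _ = (lostSet A).card * (2 * W + 1) := by rw [Finset.sum_const, smul_eq_mul]
        _ ≤ _ := Nat.mul_le_mul_right _ (lostSet_card A)
    have hP : (Fr ×ˢ Finset.range (h + 1)).card ≤ Z.card := by
      refine card_le_of_rel (fun a b => b.2 = a.1 + a.2 ∧ ∃ t0 t2, Witness A B F strat t0 a.1 t2 b.1 ∧
        b.2 < t2) ?_ ?_
      · rintro ⟨t1, j⟩ hmem
        obtain ⟨h1, h2⟩ := Finset.mem_product.1 hmem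
        have h2 : j < h + 1 := Finset.mem_range.1 h2
        obtain ⟨h3, t0, t2, l, hw, h4, h5⟩ := Finset.mem_filter.1 h1
        have hlong := (hL t1 h3).2
        have h12 := hw.2.2.1
        have hlt : t1 + j < t2 := by
          by_contra hc
          exact hlong ⟨t2, h12.2.1, h12.2.2.1, by omega, h12.2.2.2.1.symm⟩
        refine ⟨⟨l, t1 + j⟩, Finset.mem_sigma.2 ⟨hw.2.2.2.1, Finset.mem_Icc.2 ⟨?_, ?_⟩⟩,
          rfl, t0, t2, hw, hlt⟩
        · show ω l - W ≤ t1 + j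
          simp only at h4
          omega
        · show t1 + j ≤ ω l + W
          omega
      · rintro ⟨t1, j⟩ _ ⟨t1', j'⟩ _ ⟨l, τ⟩ ⟨h1, t0, t2, hw, h2⟩ ⟨h1', t0', t2', hw', h2'⟩
        simp only at h1 h1' h2 h2' hw hw'
        have g1 := hw.2.2.2.2.2.2 τ (by omega) h2
        have g2 := hw'.2.2.2.2.2.2 τ (by omega) h2'
        have h12 := hw.2.2.1
        have h12' := hw'.2.2.1
        have hTT := h12.2.2.1
        have hpp := (hF τ (by omega)).2 _ g1.2 _ g2.2 (g1.1.trans g2.1.symm)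
        have : t1 = t1' := evict_uniq (τ := τ) h12.1 h12'.1 hpp (by omega) (by omega)
          (fun s h8 h9 => h12.2.2.2.2 s h8 (by omega)) (fun s h8 h9 => h12'.2.2.2.2 s h8 (by omega))
        subst this
        have : j = j' := by omega
        rw [this]
    rw [Finset.card_product, Finset.card_range] at hP
    exact hP.trans hZ
  refine ⟨Fr.card, N0.card + N2.card, ?_, hFr, ?_⟩
  · have h1 := Finset.card_le_card hsub
    have h2 := Finset.card_union_le (missSet A) (neverSet B ∪ (Y2 ∪ (Y4 ∪ (Fr ∪ (N0 ∪ N2)))))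
    have h3 := Finset.card_union_le (neverSet B) (Y2 ∪ (Y4 ∪ (Fr ∪ (N0 ∪ N2))))
    have h4 := Finset.card_union_le Y2 (Y4 ∪ (Fr ∪ (N0 ∪ N2)))
    have h5 := Finset.card_union_le Y4 (Fr ∪ (N0 ∪ N2))
    have h6 := Finset.card_union_le Fr (N0 ∪ N2)
    have h7 := Finset.card_union_le N0 N2
    have h8 := neverSet_card A B
    rw [missSet_card] at h2
    show L.card ≤ _
    omega
  · calc (N0.card + N2.card) * (W + 1) ≤ (2 * (errSet σ T ω W).card) * (W + 1) :=
          Nat.mul_le_mul_right _ (by omega)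
      _ = 2 * ((errSet σ T ω W).card * (W + 1)) := by ring
      _ ≤ _ := Nat.mul_le_mul_left _ (errSet_card σ T ω W)

end Long

/-! ### The random evictions are long with probability at least one half -/

section Random

variable {k T : ℕ} {σ : ℕ → S} {ω : ℕ → ℕ}

lemma rand_invariant {R : (Fin (T + 1) → Fin k) → CacheRun S k T σ}
    {strat : (Fin (T + 1) → Fin k) → ℕ → Fin 3}
    (hR : ∀ u, IsAlternatingOracleSeeded (R u) ω (strat u) u) (hA : Adapted R strat)
    {u u' : Fin (T + 1) → Fin k} {t : ℕ}
    (huu : ∀ s : Fin (T + 1), (s : ℕ) < t → u s = u' s)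
    (h : t ∈ randSet (R u) (strat u)) : t ∈ randSet (R u') (strat u') := by
  obtain ⟨he, hs⟩ := mem_randSet.1 h
  have hpast : ∀ τ, τ < t → (R u).C τ = (R u').C τ ∧ (R u).p τ = (R u').p τ ∧
      strat u τ = strat u' τ := fun τ hτ => hA u u' τ (fun s hs => huu s (by omega))
  have hev : ∀ τ, τ ≤ t → EvictStep (R u) τ → EvictStep (R u') τ := by
    rintro τ hτ ⟨a1, a2, a3, a4⟩
    have := (hpast (τ - 1) (by omega)).1
    exact ⟨a1, a2, this ▸ a3, this ▸ a4⟩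
  obtain ⟨t0, h01, hs0⟩ := strat_rand (hR u).1 he hs
  have hlt := h01.2.1
  obtain ⟨b1, b2, b3⟩ := hpast t0 hlt
  have h01' : Trig (R u') t0 t := by
    obtain ⟨a1, a2, a3, a4, a5⟩ := h01
    exact ⟨hev t0 hlt.le a1, a2, a3, b2 ▸ a4, b2 ▸ a5⟩
  exact mem_randSet.2 ⟨hev t le_rfl he, trig_zero (hR u').1 h01' (b3 ▸ hs0)⟩

lemma rand_short {R : (Fin (T + 1) → Fin k) → CacheRun S k T σ}
    {strat : (Fin (T + 1) → Fin k) → ℕ → Fin 3}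
    (hR : ∀ u, IsAlternatingOracleSeeded (R u) ω (strat u) u) (hA : Adapted R strat)
    (h : ℕ) (hk : 2 * h ≤ k) (t : ℕ) (h1 : 1 ≤ t) (hT : t ≤ T) :
    2 * ∑ u, (if t ∈ randSet (R u) (strat u) ∧ ShortReturn (R u) h t then 1 else 0) ≤
      ∑ u, (if t ∈ randSet (R u) (strat u) then 1 else 0) := by
  let tt : Fin (T + 1) := ⟨t, Nat.lt_succ_of_le hT⟩
  let e := (Equiv.funSplitAt tt (Fin k)).symm
  rw [← Equiv.sum_comp e, ← Equiv.sum_comp e, Fintype.sum_prod_type_right,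
    Fintype.sum_prod_type_right, Finset.mul_sum]
  apply Finset.sum_le_sum
  intro w _
  have hagree : ∀ v v' : Fin k, ∀ s : Fin (T + 1), (s : ℕ) < t → e (v, w) s = e (v', w) s := by
    intro v v' s hs
    have : s ≠ tt := by
      intro hc
      rw [hc] at hs
      exact absurd hs (lt_irrefl _)
    simp [e, Equiv.funSplitAt, Equiv.piSplitAt, this]
  have hval : ∀ v : Fin k, e (v, w) tt = v := by
    intro v
    simp [e, Equiv.funSplitAt, Equiv.piSplitAt]
  by_cases hall : ∃ v, t ∈ randSet (R (e (v, w))) (strat (e (v, w)))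
  · obtain ⟨v0, hv0⟩ := hall
    have hall : ∀ v, t ∈ randSet (R (e (v, w))) (strat (e (v, w))) :=
      fun v => rand_invariant hR hA (hagree v0 v) hv0
    have hC : ∀ v, (R (e (v, w))).C (t - 1) = (R (e (v0, w))).C (t - 1) := fun v =>
      (hA _ _ (t - 1) (fun s hs => hagree v v0 s (by omega))).1
    have hlast : ∀ v, lastIdx (R (e (v, w))) (t - 1) = lastIdx (R (e (v0, w))) (t - 1) := by
      intro v
      unfold lastIdx
      rw [hC v]
    have hcard : (Finset.univ.filter (fun v => ShortReturn (R (e (v, w))) h t)).card ≤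
        (Finset.Ioc t (t + h)).card := by
      refine card_le_of_rel (fun v s => σ s = (R (e (v, w))).p t) ?_ ?_
      · intro v hv
        obtain ⟨s, a1, a2, a3, a4⟩ := (Finset.mem_filter.1 hv).2
        exact ⟨s, Finset.mem_Ioc.2 ⟨a1, a3⟩, a4⟩
      · intro v _ v' _ s a1 a2
        have hv := mem_randSet.1 (hall v)
        have hv' := mem_randSet.1 (hall v')
        obtain ⟨i, hi, hip⟩ := exists_lastIdx _ (t := t - 1) (by omega) (evict_mem' hv.1)
        have hi' : i ∈ lastIdx (R (e (v', w))) (t - 1) := by rw [hlast v', ← hlast v]; exact hi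
        have r1 := (hR (e (v, w))).2 t hv.1 hv.2 i hi hip.symm
        have r2 := (hR (e (v', w))).2 t hv'.1 hv'.2 i hi' (by rw [← a2, a1, hip])
        rw [hlast v', ← hlast v, r1] at r2
        have r3 : e (v, w) tt = e (v', w) tt := Fin.ext r2
        rwa [hval, hval] at r3
    simp only [hall, true_and, if_true]
    rw [← Finset.card_filter]
    rw [Nat.card_Ioc] at hcard
    simp only [Finset.sum_const, Finset.card_univ, Fintype.card_fin, smul_eq_mul]
    omega
  · push Not at hall
    simp [hall]

lemma sum_rand_le {R : (Fin (T + 1) → Fin k) → CacheRun S k T σ}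
    {strat : (Fin (T + 1) → Fin k) → ℕ → Fin 3}
    (hR : ∀ u, IsAlternatingOracleSeeded (R u) ω (strat u) u) (hA : Adapted R strat)
    (h : ℕ) (hk : 2 * h ≤ k) :
    ∑ u, (randSet (R u) (strat u)).card ≤ 2 * ∑ u, (longSet (R u) (strat u) h).card := by
  have e1 : ∀ u, (randSet (R u) (strat u)).card =
      ∑ t ∈ Finset.Icc 1 T, (if t ∈ randSet (R u) (strat u) then 1 else 0) := by
    intro u
    rw [← Finset.card_filter]
    congr 1
    ext t
    simp only [Finset.mem_filter, Finset.mem_Icc]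
    exact ⟨fun h => ⟨⟨(mem_randSet.1 h).1.1, (mem_randSet.1 h).1.2.1⟩, h⟩, fun h => h.2⟩
  have e2 : ∀ u, (longSet (R u) (strat u) h).card =
      ∑ t ∈ Finset.Icc 1 T,
        (if t ∈ randSet (R u) (strat u) ∧ ¬ ShortReturn (R u) h t then 1 else 0) := by
    intro u
    rw [← Finset.card_filter]
    congr 1
    ext t
    unfold longSet
    simp only [Finset.mem_filter, Finset.mem_Icc]
    exact ⟨fun h => ⟨⟨(mem_randSet.1 h.1).1.1, (mem_randSet.1 h.1).1.2.1⟩, h⟩, fun h => h.2⟩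
  simp only [e1, e2]
  rw [Finset.sum_comm, Finset.sum_comm (s := Finset.univ), Finset.mul_sum]
  apply Finset.sum_le_sum
  intro t ht
  obtain ⟨h1, h2⟩ := Finset.mem_Icc.1 ht
  have hs := rand_short hR hA h hk t h1 h2
  have hsplit : ∑ u, (if t ∈ randSet (R u) (strat u) then 1 else 0) =
      ∑ u, (if t ∈ randSet (R u) (strat u) ∧ ShortReturn (R u) h t then 1 else 0) +
      ∑ u, (if t ∈ randSet (R u) (strat u) ∧ ¬ ShortReturn (R u) h t then 1 else 0) := by
    rw [← Finset.sum_add_distrib]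
    apply Finset.sum_congr rfl
    intro u _
    by_cases a : t ∈ randSet (R u) (strat u) <;> by_cases b : ShortReturn (R u) h t <;> simp [a, b]
  omega

end Random

lemma real_long_bound {k T : ℕ} {σ : ℕ → S} {ω : ℕ → ℕ} {strat : ℕ → Fin 3}
    (A B : CacheRun S k T σ) (hB : IsAlternatingOracle B ω strat) (hk : 0 < k) (W : ℕ) :
    ((longSet B strat (k / 2)).card : ℝ) ≤
      12 * misses A + misses A * (2 * W + 1) * 2 / k + 2 * totalLoss σ T ω / (W + 1) := by
  obtain ⟨fr, nf, h1, h2, h3⟩ := long_bound A B hB (k / 2) W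
  have hk' : (0 : ℝ) < k := by exact_mod_cast hk
  have h1' : ((longSet B strat (k / 2)).card : ℝ) ≤ 12 * misses A + fr + nf := by exact_mod_cast h1
  have h2' : (fr : ℝ) ≤ misses A * (2 * W + 1) * 2 / k := by
    rw [le_div_iff₀ hk']
    have : fr * k ≤ misses A * (2 * W + 1) * 2 := by
      have : k ≤ 2 * (k / 2 + 1) := by omega
      calc fr * k ≤ fr * (2 * (k / 2 + 1)) := Nat.mul_le_mul_left _ this
        _ = fr * (k / 2 + 1) * 2 := by ring
        _ ≤ _ := Nat.mul_le_mul_right _ h2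
    exact_mod_cast this
  have h3' : (nf : ℝ) ≤ 2 * totalLoss σ T ω / (W + 1) := by
    rw [le_div_iff₀ (by positivity)]
    exact_mod_cast h3
  linarith

/-- The numerical optimization over the window length `W`. -/
lemma numeric (n η k : ℝ) (hn : 1 ≤ n) (hη : 0 ≤ η) (hk : 10 ≤ k) :
    ∃ W : ℕ, n + 6 * (12 * n + n * (2 * W + 1) * 2 / k + 2 * η / (W + 1)) ≤
      230 * n + 60 * Real.sqrt (60 * η * n / k) := by
  set s := Real.sqrt (η * n / k) with hs
  have hs0 : 0 ≤ s := Real.sqrt_nonneg _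
  have hk0 : 0 < k := by linarith
  have hn0 : 0 < n := by linarith
  have hss : s * s = η * n / k := Real.mul_self_sqrt (by positivity)
  have hη' : η = s * s * k / n := by rw [hss]; field_simp
  have hbig : s ≤ Real.sqrt (60 * η * n / k) := by
    apply Real.sqrt_le_sqrt
    rw [div_le_div_iff_of_pos_right hk0]
    nlinarith [mul_nonneg hη hn0.le]
  refine ⟨⌊k * (1 + s / n)⌋₊, ?_⟩
  set W : ℝ := (⌊k * (1 + s / n)⌋₊ : ℝ) with hW
  have hpos : 0 ≤ k * (1 + s / n) := by positivity
  have hW1 : W ≤ k * (1 + s / n) := Nat.floor_le hpos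
  have hW2 : k * (1 + s / n) < W + 1 := Nat.lt_floor_add_one _
  have a1 : n * (2 * W + 1) * 2 / k ≤ 4 * n + 4 * s + n := by
    rw [div_le_iff₀ hk0]
    have : n * W ≤ n * (k * (1 + s / n)) := mul_le_mul_of_nonneg_left hW1 hn0.le
    have h2 : n * (k * (1 + s / n)) = k * (n + s) := by field_simp
    nlinarith
  have a2 : 2 * η / (W + 1) ≤ 2 * s := by
    have hWp : 0 < W + 1 := lt_of_le_of_lt hpos hW2
    rw [div_le_iff₀ hWp]
    have h3 : η ≤ s * (k * (1 + s / n)) := by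
      have h4 : s * (k * (1 + s / n)) = s * k + s * s * k / n := by field_simp
      rw [h4, ← hη']
      nlinarith [mul_nonneg hs0 hk0.le]
    have h5 : s * (k * (1 + s / n)) ≤ s * (W + 1) := mul_le_mul_of_nonneg_left hW2.le hs0
    linarith
  linarith

/-- There is an absolute constant `c` such that for every caching
instance with `k ≥ 10`, the AlternatingOracle strategy (driven by uniform i.i.d. seeds)
satisfies `E[OBJ_B] ≤ max{230·OPT + 60·√(60·η·OPT/k), c}`. -/
theorem stmt15 :
    ∃ c : ℝ, ∀ (S : Type) [DecidableEq S] (k T : ℕ) (σ : ℕ → S) (ω : ℕ → ℕ)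
      (A : CacheRun S k T σ), 10 ≤ k → IsBelady A →
      ∀ (R : (Fin (T + 1) → Fin k) → CacheRun S k T σ)
        (strat : (Fin (T + 1) → Fin k) → ℕ → Fin 3),
        (∀ u, IsAlternatingOracleSeeded (R u) ω (strat u) u) →
        Adapted R strat →
        (∑ u : Fin (T + 1) → Fin k, (misses (R u) : ℝ)) / (k : ℝ) ^ (T + 1) ≤
          max (230 * misses A +
            60 * Real.sqrt (60 * totalLoss σ T ω * misses A / k)) c := by
  refine ⟨0, ?_⟩
  intro S _ k T σ ω A hk _ R strat hR hA
  refine le_trans ?_ (le_max_left _ _)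
  have hk0 : (0 : ℝ) < k := by
    have : 0 < k := by omega
    exact_mod_cast this
  have hpow : (0 : ℝ) < (k : ℝ) ^ (T + 1) := by positivity
  rw [div_le_iff₀ hpow]
  rcases Nat.eq_zero_or_pos T with hT | hT
  · have hz : ∀ u, misses (R u) = 0 := by
      intro u
      subst hT
      simp [misses]
    simp only [hz, Nat.cast_zero, Finset.sum_const_zero]
    positivity
  have hn : 1 ≤ misses A := by
    rw [← missSet_card]
    exact Finset.card_pos.2 ⟨1, mem_missSet.2 ⟨⟨le_rfl, hT⟩, by simp [A.init]⟩⟩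
  obtain ⟨W, hW⟩ := numeric (misses A) (totalLoss σ T ω) k (by exact_mod_cast hn)
    (by positivity) (by exact_mod_cast hk)
  have h1 : (∑ u, (misses (R u) : ℝ)) ≤
      ∑ u, ((misses A : ℝ) + 3 * ((randSet (R u) (strat u)).card : ℝ)) := by
    apply Finset.sum_le_sum
    intro u _
    exact_mod_cast misses_le A (R u) (hR u).1
  have h2 : (∑ u, ((randSet (R u) (strat u)).card : ℝ)) ≤
      2 * ∑ u, ((longSet (R u) (strat u) (k / 2)).card : ℝ) := by
    exact_mod_cast sum_rand_le hR hA (k / 2) (by omega)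
  set b : ℝ := 12 * misses A + misses A * (2 * W + 1) * 2 / k + 2 * totalLoss σ T ω / (W + 1)
    with hb
  have hcard : (Finset.univ : Finset (Fin (T + 1) → Fin k)).card = k ^ (T + 1) := by
    simp
  have h3 : (∑ u, ((longSet (R u) (strat u) (k / 2)).card : ℝ)) ≤ (k : ℝ) ^ (T + 1) * b := by
    calc _ ≤ ∑ _u : Fin (T + 1) → Fin k, b :=
          Finset.sum_le_sum (fun u _ => real_long_bound A (R u) (hR u).1 (by omega) W)
      _ = _ := by rw [Finset.sum_const, hcard, nsmul_eq_mul]; push_cast; ring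
  rw [Finset.sum_add_distrib, ← Finset.mul_sum, Finset.sum_const, hcard, nsmul_eq_mul] at h1
  push_cast at h1
  calc _ ≤ ((misses A : ℝ) + 6 * b) * (k : ℝ) ^ (T + 1) := by linarith
    _ ≤ _ := mul_le_mul_of_nonneg_right hW hpow.le

end Caching
end

section
/- There exist absolute constants C and c such that for every caching instance with cache size k ≥ 10, the AlternatingOracle strategy B satisfies E[OBJ_B] ≤ C·(OPT + √(η·OPT / k)) + c, where the expectation is over the internal random choices of the algorithm. In particular, AlternatingOracle is O(√((1/k)·(η/OPT)))-competitive. -/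
namespace Caching

attribute [local instance low] Classical.propDecidable

variable {S : Type} [DecidableEq S]

/-! ### Matchings between two caches and their cost -/

/-- `P` encodes a bijection between `A \ Q` and `Q \ A`. -/
def Valid (A Q : Finset S) (P : Multiset (S × S)) : Prop :=
  P.map Prod.fst = (A \ Q).val ∧ P.map Prod.snd = (Q \ A).val

/-- Cost of a matching: every pair `(a, b)` costs `F + f a b`. -/
def cost (F : ℕ) (f : S → S → ℕ) (P : Multiset (S × S)) : ℕ :=
  (P.map fun p => F + f p.1 p.2).sum

/-- Cost of the cheapest matching. -/
noncomputable def Psi (F : ℕ) (f : S → S → ℕ) (A Q : Finset S) : ℕ :=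
  sInf {n | ∃ P, Valid A Q P ∧ n = cost F f P}

lemma psi_le {F : ℕ} {f : S → S → ℕ} {A Q : Finset S} {P : Multiset (S × S)}
    (h : Valid A Q P) : Psi F f A Q ≤ cost F f P :=
  Nat.sInf_le ⟨P, h, rfl⟩

lemma exists_psi (F : ℕ) (f : S → S → ℕ) {A Q : Finset S}
    (h : A = Q ∨ (A.card = Q.card)) : ∃ P, Valid A Q P ∧ cost F f P = Psi F f A Q := by
  have hc : (A \ Q).card = (Q \ A).card := by
    have h' : A.card = Q.card := by
      rcases h with h | h
      · rw [h]
      · exact h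
    have h1 := Finset.card_sdiff_add_card_inter A Q
    have h2 := Finset.card_sdiff_add_card_inter Q A
    rw [Finset.inter_comm] at h2
    omega
  have hne : {n | ∃ P, Valid A Q P ∧ n = cost F f P}.Nonempty := by
    refine ⟨_, (((A \ Q).toList.zip (Q \ A).toList : List (S × S)) : Multiset (S × S)), ⟨?_, ?_⟩,
      rfl⟩
    · rw [Multiset.map_coe, List.map_fst_zip (by simp [hc])]
      simp
    · rw [Multiset.map_coe, List.map_snd_zip (by simp [hc])]
      simp
  obtain ⟨P, h1, h2⟩ := Nat.sInf_mem hne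
  exact ⟨P, h1, h2.symm⟩

lemma cost_cons (F : ℕ) (f : S → S → ℕ) (a b : S) (P : Multiset (S × S)) :
    cost F f ((a, b) ::ₘ P) = F + f a b + cost F f P := by
  simp [cost]

lemma cost_congr {F : ℕ} {f f' : S → S → ℕ} {P : Multiset (S × S)}
    (h : ∀ p ∈ P, f' p.1 p.2 = f p.1 p.2) : cost F f' P = cost F f P := by
  unfold cost
  rw [Multiset.map_congr rfl]
  intro p hp
  rw [h p hp]

lemma Valid.fst_mem {A Q : Finset S} {P : Multiset (S × S)} (h : Valid A Q P) {p : S × S}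
    (hp : p ∈ P) : p.1 ∈ A ∧ p.1 ∉ Q := by
  have : p.1 ∈ P.map Prod.fst := Multiset.mem_map_of_mem _ hp
  rw [h.1] at this
  exact Finset.mem_sdiff.1 this

lemma Valid.snd_mem {A Q : Finset S} {P : Multiset (S × S)} (h : Valid A Q P) {p : S × S}
    (hp : p ∈ P) : p.2 ∈ Q ∧ p.2 ∉ A := by
  have : p.2 ∈ P.map Prod.snd := Multiset.mem_map_of_mem _ hp
  rw [h.2] at this
  exact Finset.mem_sdiff.1 this

lemma Valid.exists_fst {A Q : Finset S} {P : Multiset (S × S)} (h : Valid A Q P) {x : S}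
    (h1 : x ∈ A) (h2 : x ∉ Q) : ∃ e, (x, e) ∈ P := by
  have : x ∈ P.map Prod.fst := by
    rw [h.1]
    exact Finset.mem_sdiff.2 ⟨h1, h2⟩
  obtain ⟨⟨a, b⟩, hp, rfl⟩ := Multiset.mem_map.1 this
  exact ⟨b, hp⟩

lemma Valid.swap {A Q : Finset S} {P : Multiset (S × S)} (h : Valid A Q P) :
    Valid Q A (P.map Prod.swap) := by
  refine ⟨?_, ?_⟩
  · rw [Multiset.map_map, ← h.2]; rfl
  · rw [Multiset.map_map, ← h.1]; rfl

lemma cost_swap (F : ℕ) (f : S → S → ℕ) (P : Multiset (S × S)) :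
    cost F (fun a b => f b a) (P.map Prod.swap) = cost F f P := by
  unfold cost
  rw [Multiset.map_map]; rfl

/-- In a matching, the element `x` of `A \ Q` occurs in no other pair. -/
lemma Valid.ne_of_cons {A Q : Finset S} {P : Multiset (S × S)} {x e : S}
    (h : Valid A Q ((x, e) ::ₘ P)) {p : S × S} (hp : p ∈ P) : p.1 ≠ x := by
  have h1 := h.1
  have hn : ((x, e) ::ₘ P |>.map Prod.fst).Nodup := by rw [h1]; exact (A \ Q).nodup
  rw [Multiset.map_cons, Multiset.nodup_cons] at hn
  intro hx
  have h3 := Multiset.mem_map_of_mem Prod.fst hp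
  rw [hx] at h3
  exact hn.1 h3

lemma val_erase_of_cons {U : Finset S} {x : S} {M : Multiset S} (h : x ::ₘ M = U.val) :
    M = (U.erase x).val := by
  rw [Finset.erase_val, ← h, Multiset.erase_cons_head]

/-- The page `x ∈ A \ Q` enters `Q`, replacing `y`. -/
lemma move_fine {F : ℕ} {f f' : S → S → ℕ} (hF' : ∀ a b, f' a b ≤ F)
    {A Q : Finset S} {P : Multiset (S × S)} (hP : Valid A Q P) {x e y : S} (hxA : x ∈ A)
    (hxQ : x ∉ Q) (hxe : (x, e) ∈ P) (hy : y ∈ Q)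
    (hff : ∀ a b, a ∈ A → a ∉ Q → a ≠ x → b ∈ Q → b ∉ A → f' a b = f a b) :
    ∃ P', Valid A (insert x (Q.erase y)) P' ∧
      cost F f' P' + f x e ≤ cost F f P + f' y e := by
  obtain ⟨P0, rfl⟩ := Multiset.exists_cons_of_mem hxe
  have hc0 : ∀ p ∈ P0, f' p.1 p.2 = f p.1 p.2 := fun p hp =>
    hff _ _ (hP.fst_mem (Multiset.mem_cons_of_mem hp)).1
      (hP.fst_mem (Multiset.mem_cons_of_mem hp)).2 (hP.ne_of_cons hp)
      (hP.snd_mem (Multiset.mem_cons_of_mem hp)).1 (hP.snd_mem (Multiset.mem_cons_of_mem hp)).2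
  have h1 := hP.1
  have h2 := hP.2
  rw [Multiset.map_cons] at h1 h2
  have h1' := val_erase_of_cons h1
  have hyx : y ≠ x := fun h => hxQ (h ▸ hy)
  by_cases hyA : y ∈ A
  · refine ⟨(y, e) ::ₘ P0, ⟨?_, ?_⟩, ?_⟩
    · rw [Multiset.map_cons, h1', ← Finset.insert_val_of_notMem (by simp [hy])]
      congr 1
      ext a
      simp only [Finset.mem_insert, Finset.mem_erase, Finset.mem_sdiff]
      grind
    · rw [Multiset.map_cons, h2]
      congr 1
      ext a
      simp only [Finset.mem_insert, Finset.mem_erase, Finset.mem_sdiff]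
      grind
    · rw [cost_cons, cost_cons, cost_congr hc0]
      omega
  · have hU : (A \ Q).erase x = A \ insert x (Q.erase y) := by
      ext a
      simp only [Finset.mem_insert, Finset.mem_erase, Finset.mem_sdiff]
      grind
    have hV : (Q \ A).erase y = insert x (Q.erase y) \ A := by
      ext a
      simp only [Finset.mem_insert, Finset.mem_erase, Finset.mem_sdiff]
      grind
    by_cases hye : y = e
    · subst hye
      refine ⟨P0, ⟨?_, ?_⟩, ?_⟩
      · rw [h1', hU]
      · rw [val_erase_of_cons h2, hV]
      · rw [cost_cons, cost_congr hc0]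
        omega
    · obtain ⟨a, ha⟩ : ∃ a, (a, y) ∈ P0 := by
        have : y ∈ P0.map Prod.snd := by
          have h3 : y ∈ e ::ₘ P0.map Prod.snd := by rw [h2]; exact Finset.mem_sdiff.2 ⟨hy, hyA⟩
          rcases Multiset.mem_cons.1 h3 with h3 | h3
          · exact absurd h3 hye
          · exact h3
        obtain ⟨⟨a, b⟩, hp, rfl⟩ := Multiset.mem_map.1 this
        exact ⟨a, hp⟩
      obtain ⟨P1, rfl⟩ := Multiset.exists_cons_of_mem ha
      have hc1 : ∀ p ∈ P1, f' p.1 p.2 = f p.1 p.2 := fun p hp =>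
        hc0 p (Multiset.mem_cons_of_mem hp)
      refine ⟨(a, e) ::ₘ P1, ⟨?_, ?_⟩, ?_⟩
      · rw [← hU, ← h1']
        simp
      · rw [Multiset.map_cons, Multiset.cons_swap] at h2
        rw [← hV, ← val_erase_of_cons h2]
        simp
      · rw [cost_cons, cost_cons, cost_cons, cost_congr hc1]
        have := hF' a e
        omega

/-- A page `x` outside both caches enters `Q`, replacing `y`. -/
lemma move_new {F : ℕ} {f f' : S → S → ℕ} (hF' : ∀ a b, f' a b ≤ F)
    {A Q : Finset S} {P : Multiset (S × S)} (hP : Valid A Q P) {x y : S} (hxA : x ∉ A)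
    (hxQ : x ∉ Q) (hy : y ∈ Q)
    (hff : ∀ a b, a ∈ A → a ∉ Q → b ∈ Q → b ∉ A → f' a b = f a b) :
    ∃ P', Valid A (insert x (Q.erase y)) P' ∧ cost F f' P' ≤ cost F f P + 2 * F := by
  have hc0 : ∀ p ∈ P, f' p.1 p.2 = f p.1 p.2 := fun p hp =>
    hff _ _ (hP.fst_mem hp).1 (hP.fst_mem hp).2 (hP.snd_mem hp).1 (hP.snd_mem hp).2
  have h1 := hP.1
  have h2 := hP.2
  have hyx : y ≠ x := fun h => hxQ (h ▸ hy)
  by_cases hyA : y ∈ A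
  · refine ⟨(y, x) ::ₘ P, ⟨?_, ?_⟩, ?_⟩
    · rw [Multiset.map_cons, h1, ← Finset.insert_val_of_notMem (by simp [hy])]
      congr 1
      ext a
      simp only [Finset.mem_insert, Finset.mem_erase, Finset.mem_sdiff]
      grind
    · rw [Multiset.map_cons, h2, ← Finset.insert_val_of_notMem (by simp [hxQ])]
      congr 1
      ext a
      simp only [Finset.mem_insert, Finset.mem_erase, Finset.mem_sdiff]
      grind
    · rw [cost_cons, cost_congr hc0]
      have := hF' y x
      omega
  · obtain ⟨a, ha⟩ : ∃ a, (a, y) ∈ P := by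
      have : y ∈ P.map Prod.snd := by rw [h2]; exact Finset.mem_sdiff.2 ⟨hy, hyA⟩
      obtain ⟨⟨a, b⟩, hp, rfl⟩ := Multiset.mem_map.1 this
      exact ⟨a, hp⟩
    obtain ⟨P0, rfl⟩ := Multiset.exists_cons_of_mem ha
    rw [Multiset.map_cons] at h2
    refine ⟨(a, x) ::ₘ P0, ⟨?_, ?_⟩, ?_⟩
    · rw [Multiset.map_cons] at h1 ⊢
      rw [h1]
      congr 1
      ext b
      simp only [Finset.mem_insert, Finset.mem_erase, Finset.mem_sdiff]
      grind
    · rw [Multiset.map_cons, val_erase_of_cons h2,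
        ← Finset.insert_val_of_notMem (by simp [hxQ])]
      congr 1
      ext b
      simp only [Finset.mem_insert, Finset.mem_erase, Finset.mem_sdiff]
      grind
    · rw [cost_cons, cost_cons, cost_congr fun p hp => hc0 p (Multiset.mem_cons_of_mem hp)]
      have := hF' a x
      omega

/-- A page `x ∈ Q \ A` enters `A`, replacing `z`. -/
lemma move_opt {F : ℕ} {f f' : S → S → ℕ} (hF' : ∀ a b, f' a b ≤ F)
    {A Q : Finset S} {P : Multiset (S × S)} (hP : Valid A Q P) {x z : S} (hxA : x ∉ A)
    (hxQ : x ∈ Q) (hz : z ∈ A)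
    (hff : ∀ a b, a ∈ A → a ∉ Q → b ∈ Q → b ∉ A → b ≠ x → f' a b = f a b) :
    ∃ P', Valid (insert x (A.erase z)) Q P' ∧ cost F f' P' ≤ cost F f P + F := by
  obtain ⟨e, he⟩ := hP.swap.exists_fst hxQ hxA
  obtain ⟨P', h1, h2⟩ := move_fine (F := F) (f := fun a b => f b a) (f' := fun a b => f' b a)
    (fun a b => hF' b a) hP.swap hxQ hxA he hz
    (fun a b h1 h2 h3 h4 h5 => hff b a h4 h5 h1 h2 h3)
  refine ⟨P'.map Prod.swap, h1.swap, ?_⟩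
  rw [cost_swap] at h2
  have h3 : cost F f' (P'.map Prod.swap) = cost F (fun a b => f' b a) P' :=
    cost_swap F (fun a b => f' b a) P'
  have := hF' e z
  omega

/-! ### Last requests, labels, basic facts on runs -/

/-- The index of the last request of `s` up to time `t`. -/
def lst (σ : ℕ → S) (t : ℕ) (s : S) : ℕ :=
  ((Finset.Icc 1 t).filter fun i => σ i = s).sup id

lemma lst_spec {σ : ℕ → S} {t : ℕ} {s : S} (h : ∃ i, 1 ≤ i ∧ i ≤ t ∧ σ i = s) :
    1 ≤ lst σ t s ∧ lst σ t s ≤ t ∧ σ (lst σ t s) = s ∧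
      ∀ j, lst σ t s < j → j ≤ t → σ j ≠ s := by
  obtain ⟨i, h1, h2, h3⟩ := h
  have hne : ((Finset.Icc 1 t).filter fun i => σ i = s).Nonempty := ⟨i, by simp [*]⟩
  obtain ⟨m, hm, hm'⟩ := Finset.exists_mem_eq_sup _ hne id
  have hm2 : lst σ t s = m := hm'
  simp only [Finset.mem_filter, Finset.mem_Icc] at hm
  rw [hm2]
  refine ⟨hm.1.1, hm.1.2, hm.2, fun j hj hjt hjs => ?_⟩
  have : j ≤ lst σ t s := Finset.le_sup (f := id)
    (by simp only [Finset.mem_filter, Finset.mem_Icc]; exact ⟨⟨by omega, hjt⟩, hjs⟩)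
  omega

lemma lst_eq {σ : ℕ → S} {t i : ℕ} (h1 : 1 ≤ i) (h2 : i ≤ t)
    (h3 : ∀ j, i < j → j ≤ t → σ j ≠ σ i) : lst σ t (σ i) = i := by
  obtain ⟨a, b, c, d⟩ := lst_spec (σ := σ) (t := t) ⟨i, h1, h2, rfl⟩
  rcases lt_trichotomy (lst σ t (σ i)) i with h | h | h
  · exact absurd rfl (d i h h2)
  · exact h
  · exact absurd c (h3 _ h b)

lemma lst_succ_ne {σ : ℕ → S} {t : ℕ} {s : S} (h : σ (t + 1) ≠ s) :
    lst σ (t + 1) s = lst σ t s := by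
  unfold lst
  congr 1
  ext i
  simp only [Finset.mem_filter, Finset.mem_Icc]
  constructor
  · rintro ⟨⟨h1, h2⟩, h3⟩
    have : i ≠ t + 1 := by rintro rfl; exact h h3
    exact ⟨⟨h1, by omega⟩, h3⟩
  · rintro ⟨⟨h1, h2⟩, h3⟩
    exact ⟨⟨h1, by omega⟩, h3⟩

lemma nextReq_spec (σ : ℕ → S) (T i : ℕ) :
    (nextReq σ T i ≤ T → i < nextReq σ T i ∧ σ (nextReq σ T i) = σ i) ∧
      ∀ j, i < j → j ≤ T → σ j = σ i → nextReq σ T i ≤ j := by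
  unfold nextReq
  split_ifs with h
  · refine ⟨fun _ => ⟨(Nat.find_spec h).1, (Nat.find_spec h).2.2⟩, fun j h1 h2 h3 => ?_⟩
    exact Nat.find_min' h ⟨h1, h2, h3⟩
  · refine ⟨fun h => by omega, fun j h1 h2 h3 => ?_⟩
    exact absurd ⟨j, h1, h2, h3⟩ h

lemma nextReq_lst_eq {σ : ℕ → S} {T t : ℕ} {s : S} (h : ∃ i, 1 ≤ i ∧ i ≤ t ∧ σ i = s)
    (ht : t + 1 ≤ T) (hs : σ (t + 1) = s) : nextReq σ T (lst σ t s) = t + 1 := by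
  obtain ⟨a, b, c, d⟩ := lst_spec h
  obtain ⟨h1, h2⟩ := nextReq_spec σ T (lst σ t s)
  have h3 := h2 (t + 1) (by omega) ht (by rw [hs, c])
  obtain ⟨h4, h5⟩ := h1 (by omega)
  by_contra hne
  exact d _ h4 (by omega) (by rw [h5, c])

lemma nextReq_lst_gt {σ : ℕ → S} {T t : ℕ} {s : S} (h : ∃ i, 1 ≤ i ∧ i ≤ t ∧ σ i = s)
    (ht : t + 1 ≤ T) (hs : σ (t + 1) ≠ s) : t + 1 < nextReq σ T (lst σ t s) := by
  obtain ⟨a, b, c, d⟩ := lst_spec h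
  obtain ⟨h1, h2⟩ := nextReq_spec σ T (lst σ t s)
  by_contra hlt
  obtain ⟨h4, h5⟩ := h1 (by omega)
  rw [c] at h5
  by_cases he : nextReq σ T (lst σ t s) = t + 1
  · rw [he] at h5; exact hs h5
  · exact d _ h4 (by omega) h5

section runs

variable {k T : ℕ} {σ : ℕ → S}

lemma evictStep_succ {R : CacheRun S k T σ} {t : ℕ} (h : EvictStep R (t + 1)) :
    t + 1 ≤ T ∧ σ (t + 1) ∉ R.C t ∧ (R.C t).card = k ∧ R.p (t + 1) ∈ R.C t ∧
      R.C (t + 1) = insert (σ (t + 1)) ((R.C t).erase (R.p (t + 1))) := by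
  obtain ⟨h1, h2, h3, h4⟩ := h
  exact ⟨h2, h3, h4, R.evict_mem _ h1 h2 h3 h4, R.evict _ h1 h2 h3 h4⟩

lemma not_evictStep_succ {R : CacheRun S k T σ} {t : ℕ} (ht : t + 1 ≤ T)
    (h : ¬ EvictStep R (t + 1)) : R.C (t + 1) = insert (σ (t + 1)) (R.C t) := by
  apply R.hit (t + 1) (by omega) ht
  by_contra hc
  push Not at hc
  have := R.card_le t
  exact h ⟨by omega, ht, hc.1, le_antisymm this hc.2⟩

lemma mem_req (R : CacheRun S k T σ) {t : ℕ} (ht : t ≤ T) {s : S} (hs : s ∈ R.C t) :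
    ∃ i, 1 ≤ i ∧ i ≤ t ∧ σ i = s := by
  induction t with
  | zero => rw [R.init] at hs; simp at hs
  | succ t ih =>
    have key : s = σ (t + 1) ∨ s ∈ R.C t := by
      by_cases h : EvictStep R (t + 1)
      · rw [(evictStep_succ h).2.2.2.2] at hs
        simp only [Finset.mem_insert, Finset.mem_erase] at hs
        tauto
      · rw [not_evictStep_succ ht h] at hs
        simpa using hs
    rcases key with rfl | h
    · exact ⟨t + 1, by omega, le_rfl, rfl⟩
    · obtain ⟨i, h1, h2, h3⟩ := ih (by omega) h
      exact ⟨i, h1, by omega, h3⟩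

lemma stay_out_s16 (R : CacheRun S k T σ) {t t' : ℕ} {s : S} (htt : t ≤ t') (ht : t' ≤ T)
    (hs : s ∉ R.C t) (hr : ∀ j, t < j → j ≤ t' → σ j ≠ s) : s ∉ R.C t' := by
  induction t', htt using Nat.le_induction with
  | base => exact hs
  | succ m hm ih =>
    have h1 := ih (by omega) (fun j h1 h2 => hr j h1 (by omega))
    have h2 := hr (m + 1) (by omega) le_rfl
    by_cases h : EvictStep R (m + 1)
    · rw [(evictStep_succ h).2.2.2.2]
      simp only [Finset.mem_insert, Finset.mem_erase]
      rintro (h3 | h3)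
      · exact h2 h3.symm
      · exact h1 h3.2
    · rw [not_evictStep_succ ht h]
      simp only [Finset.mem_insert]
      rintro (h3 | h3)
      · exact h2 h3.symm
      · exact h1 h3

lemma sync (A R : CacheRun S k T σ) {t : ℕ} (ht : t ≤ T) :
    A.C t = R.C t ∨ ((A.C t).card = k ∧ (R.C t).card = k) := by
  have full : ∀ (R : CacheRun S k T σ) (t : ℕ), t + 1 ≤ T → (R.C t).card = k →
      (R.C (t + 1)).card = k := by
    intro R t ht hc
    by_cases h : EvictStep R (t + 1)
    · obtain ⟨a, b, c, d, e⟩ := evictStep_succ h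
      rw [e, Finset.card_insert_of_notMem (by simp [b]), Finset.card_erase_of_mem d, hc]
      have : 0 < (R.C t).card := Finset.card_pos.2 ⟨_, d⟩
      omega
    · have h1 := not_evictStep_succ ht h
      have h2 := R.card_le (t + 1)
      have h3 : (R.C t).card ≤ (R.C (t + 1)).card := by
        rw [h1]; exact Finset.card_le_card (Finset.subset_insert _ _)
      omega
  induction t with
  | zero => left; rw [A.init, R.init]
  | succ t ih =>
    rcases ih (by omega) with h | h
    · by_cases hk : (A.C t).card = k
      · right; exact ⟨full A t ht hk, full R t ht (h ▸ hk)⟩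
      · left
        rw [not_evictStep_succ ht (fun h => hk (evictStep_succ h).2.2.1),
          not_evictStep_succ ht (fun h' => hk (h ▸ (evictStep_succ h').2.2.1)), h]
    · right; exact ⟨full A t ht h.1, full R t ht h.2⟩

lemma sync_card (A R : CacheRun S k T σ) {t : ℕ} (ht : t ≤ T) :
    A.C t = R.C t ∨ (A.C t).card = (R.C t).card := by
  rcases sync A R ht with h | h
  · exact Or.inl h
  · right; rw [h.1, h.2]

/-- The label of the last eviction of the page `s`. -/
noncomputable def lab (R : CacheRun S k T σ) (strat : ℕ → Fin 3) : ℕ → S → Fin 3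
  | 0, _ => 0
  | t + 1, s => if EvictStep R (t + 1) ∧ R.p (t + 1) = s then strat (t + 1) else lab R strat t s

lemma lab_spec (R : CacheRun S k T σ) (strat : ℕ → Fin 3) {t : ℕ} (ht : t ≤ T) {s : S}
    (h : ∃ i, 1 ≤ i ∧ i ≤ t ∧ σ i = s) (hs : s ∉ R.C t) :
    ∃ t₀, t₀ ≤ t ∧ EvictStep R t₀ ∧ R.p t₀ = s ∧ strat t₀ = lab R strat t s ∧
      ∀ t₁, t₀ < t₁ → t₁ ≤ t → ¬(EvictStep R t₁ ∧ R.p t₁ = s) := by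
  induction t with
  | zero => obtain ⟨i, h1, h2, h3⟩ := h; omega
  | succ t ih =>
    by_cases he : EvictStep R (t + 1) ∧ R.p (t + 1) = s
    · refine ⟨t + 1, le_rfl, he.1, he.2, ?_, fun t₁ h1 h2 => by omega⟩
      simp only [lab]
      rw [if_pos he]
    · have hne : s ∉ R.C t ∧ s ≠ σ (t + 1) := by
        by_cases hE : EvictStep R (t + 1)
        · rw [(evictStep_succ hE).2.2.2.2] at hs
          simp only [Finset.mem_insert, Finset.mem_erase] at hs
          have : R.p (t + 1) ≠ s := fun h => he ⟨hE, h⟩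
          grind
        · rw [not_evictStep_succ ht hE] at hs
          simp only [Finset.mem_insert] at hs
          tauto
      obtain ⟨i, h1, h2, h3⟩ := h
      have hi : i ≠ t + 1 := by rintro rfl; exact hne.2 h3.symm
      obtain ⟨t₀, a, b, c, d, e⟩ := ih (by omega) ⟨i, h1, by omega, h3⟩ hne.1
      refine ⟨t₀, by omega, b, c, ?_, fun t₁ h1 h2 => ?_⟩
      · simp only [lab]
        rw [if_neg he, d]
      · by_cases h4 : t₁ = t + 1
        · rw [h4]; exact he
        · exact e t₁ h1 (by omega)

lemma lab_succ_of_mem (R : CacheRun S k T σ) (strat : ℕ → Fin 3) {t : ℕ} {s : S}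
    (h : s ∉ R.C t) : lab R strat (t + 1) s = lab R strat t s := by
  simp only [lab]
  rw [if_neg]
  rintro ⟨h1, rfl⟩
  exact h (evictStep_succ h1).2.2.2.1

lemma lastEvictedWith_lab (R : CacheRun S k T σ) (strat : ℕ → Fin 3) {t : ℕ} (ht : t + 1 ≤ T)
    (h : ∃ i, 1 ≤ i ∧ i ≤ t ∧ σ i = σ (t + 1)) (hs : σ (t + 1) ∉ R.C t) :
    LastEvictedWith R strat (t + 1) (lab R strat t (σ (t + 1))) := by
  obtain ⟨t₀, a, b, c, d, e⟩ := lab_spec R strat (by omega) h hs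
  exact ⟨t₀, by omega, b, c, d, fun t₁ h1 h2 => e t₁ h1 (by omega)⟩

lemma mem_lastIdx_lst (R : CacheRun S k T σ) {t : ℕ} (ht : t ≤ T) {s : S} (hs : s ∈ R.C t) :
    lst σ t s ∈ lastIdx R t := by
  obtain ⟨a, b, c, d⟩ := lst_spec (mem_req R ht hs)
  simp only [lastIdx, Finset.mem_filter, Finset.mem_Icc]
  refine ⟨⟨a, b⟩, by rw [c]; exact hs, fun j hj => ?_⟩
  rw [c]
  exact d j (by omega) hj.2

end runs

/-! ### The potential of a pair -/

/-- Number of half-cache units needed to cover `r`. -/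
def qq (k r : ℕ) : ℕ := (2 * r + k - 1) / k

lemma qq_mono {k r r' : ℕ} (h : r ≤ r') : qq k r ≤ qq k r' :=
  Nat.div_le_div_right (by omega)

lemma qq_pos {k r : ℕ} (hk : 0 < k) (h : 0 < r) : 1 ≤ qq k r := by
  unfold qq
  rw [Nat.le_div_iff_mul_le hk]
  omega

lemma qq_step {k r r' : ℕ} (hk : 0 < k) (h : 2 * r + k ≤ 2 * r') : qq k r + 1 ≤ qq k r' := by
  unfold qq
  rw [← Nat.add_div_right _ hk]
  exact Nat.div_le_div_right (by omega)

lemma qq_le {k r g : ℕ} (hk : 0 < k) (h : r ≤ 2 * (g * k)) : qq k r ≤ 4 * g := by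
  unfold qq
  rw [← Nat.lt_succ_iff, Nat.div_lt_iff_lt_mul hk]
  have : (4 * g).succ * k = 4 * (g * k) + k := by rw [Nat.succ_eq_add_one]; ring
  omega

lemma le_qq {k r g : ℕ} (hk : 0 < k) (h : 2 * (g * k) < r) : 4 * g ≤ qq k r := by
  unfold qq
  rw [Nat.le_div_iff_mul_le hk]
  have : 4 * g * k = 4 * (g * k) := by ring
  omega

/-- The potential of a pair `(x, e)` where `x` was last evicted with label `l`, is next requested
at time `ν`, and `e` has deadline `D`. -/
def gpot (k T g : ℕ) (l : Fin 3) (ν D : ℕ) : ℕ :=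
  if T < ν then 0
  else if D ≤ ν then (if l = 0 then 1 else if l = 1 then 0 else 2)
  else 6 * min (qq k (D - ν)) (4 * g) +
    (if l = 0 then (if D - ν ≤ 2 * (g * k) then 0 else 3) else if l = 1 then 2 else 1)

lemma gpot_le (k T g : ℕ) (l : Fin 3) (ν D : ℕ) : gpot k T g l ν D ≤ 24 * g + 3 := by
  unfold gpot
  have := min_le_right (qq k (D - ν)) (4 * g)
  split_ifs <;> omega

lemma gpot_corr_pos {k T g ν ν' D : ℕ} (hk : 0 < k) (hg : 0 < g) (h1 : ν ≤ T) (h : ν ≤ ν')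
    (hr : ν < D) : 1 + gpot k T g 2 ν' D ≤ gpot k T g 1 ν D := by
  have h2 := qq_pos (r := D - ν) hk (by omega)
  have h3 : qq k (D - ν') ≤ qq k (D - ν) := qq_mono (by omega)
  simp only [gpot]
  split_ifs <;> first | omega | (simp_all; done) | (simp_all; omega)

lemma gpot_two_le {k T g ν D : ℕ} (hr : D ≤ ν) : gpot k T g 2 ν D ≤ 2 := by
  simp only [gpot]
  split_ifs <;> omega

lemma gpot_blind_bad {k T g ν ν' D : ℕ} (hk : 0 < k) (hg : 0 < g) (h1 : ν ≤ T) (h : ν ≤ ν') :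
    1 + gpot k T g 0 ν' D ≤ gpot k T g 2 ν D + 3 := by
  have h3 : qq k (D - ν') ≤ qq k (D - ν) := qq_mono (by omega)
  simp only [gpot]
  split_ifs <;> first | omega | (simp_all; done) | (simp_all; omega)

lemma gpot_blind_good {k T g ν ν' D : ℕ} (hk : 0 < k) (hg : 0 < g) (h1 : ν ≤ T) (h : ν ≤ ν')
    (hD : D ≤ ν' + 2 * (g * k)) :
    1 + gpot k T g 0 ν' D ≤ gpot k T g 2 ν D := by
  have h3 : qq k (D - ν') ≤ qq k (D - ν) := qq_mono (by omega)
  by_cases hr : ν < D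
  · have h2 := qq_pos (r := D - ν) hk (by omega)
    simp only [gpot]
    split_ifs <;> first | omega | (simp_all; done) | (simp_all; omega)
  simp only [gpot]
  split_ifs <;> first | omega | (simp_all; done) | (simp_all; omega)

/-- The random step, one outcome: `far` outcomes gain `6` in the regime `0 < r ≤ 2 g k`. -/
lemma gpot_rand {k T g ν ν' D : ℕ} (hk : 0 < k) (hg : 0 < g) (h1 : ν ≤ T) (h : ν ≤ ν') :
    (gpot k T g 1 ν' D + 1 ≤ gpot k T g 0 ν D) ∨
    (ν < D ∧ D ≤ ν + 2 * (g * k) ∧ gpot k T g 1 ν' D ≤ gpot k T g 0 ν D + 2) := by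
  have h3 : qq k (D - ν') ≤ qq k (D - ν) := qq_mono (by omega)
  by_cases hc : ν < D ∧ D ≤ ν + 2 * (g * k)
  · right
    refine ⟨hc.1, hc.2, ?_⟩
    simp only [gpot]
    split_ifs <;> first | omega | (simp_all; done) | (simp_all; omega)
  · left
    by_cases hd : D ≤ ν
    · simp only [gpot]
      split_ifs <;> first | omega | (simp_all; done) | (simp_all; omega)
    · have h4 := le_qq (g := g) (r := D - ν) hk (by omega)
      simp only [gpot]
      split_ifs <;> first | omega | (simp_all; done) | (simp_all; omega)

lemma gpot_rand_far {k T g ν ν' D : ℕ} (hk : 0 < k) (hg : 0 < g) (h1 : ν ≤ T)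
    (h : 2 * ν + k ≤ 2 * ν' ∨ T < ν') (ha : ν < D) (hb : D ≤ ν + 2 * (g * k)) :
    gpot k T g 1 ν' D + 4 ≤ gpot k T g 0 ν D := by
  have h4 := qq_le (g := g) (r := D - ν) hk (by omega)
  have h2 := qq_pos (r := D - ν) hk (by omega)
  by_cases hT : T < ν'
  · simp only [gpot]
    split_ifs <;> first | omega | (simp_all; done) | (simp_all; omega)
  · have h5 : 2 * ν + k ≤ 2 * ν' := by tauto
    by_cases hd : D ≤ ν'
    · simp only [gpot]
      split_ifs <;> first | omega | (simp_all; done) | (simp_all; omega)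
    · have h3 : qq k (D - ν') + 1 ≤ qq k (D - ν) := qq_step hk (by omega)
      simp only [gpot]
      split_ifs <;> first | omega | (simp_all; done) | (simp_all; omega)

/-- Averaging over a uniformly random evicted page. -/
lemma sum_rand {k T g ν D : ℕ} (hk : 0 < k) (hg : 0 < g) (h1 : ν ≤ T) (Q : Finset S)
    (hQ : Q.card = k) (nu : S → ℕ) (hnu : ∀ y ∈ Q, ν < nu y)
    (hinj : ∀ y ∈ Q, ∀ y' ∈ Q, nu y ≤ T → nu y = nu y' → y = y') :
    (∑ y ∈ Q, gpot k T g 1 (nu y) D) + k ≤ k * gpot k T g 0 ν D := by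
  by_cases hc : ν < D ∧ D ≤ ν + 2 * (g * k)
  · obtain ⟨ha, hb⟩ := hc
    have hnear : 2 * (Q.filter fun y => ¬ (2 * ν + k ≤ 2 * nu y ∨ T < nu y)).card ≤ k := by
      have : (Q.filter fun y => ¬ (2 * ν + k ≤ 2 * nu y ∨ T < nu y)).card ≤
          (Finset.Ioc ν (ν + (k - 1) / 2)).card := by
        apply Finset.card_le_card_of_injOn nu
        · intro y hy
          simp only [Finset.coe_filter, Set.mem_ofPred_eq] at hy
          have := hnu y hy.1
          simp only [Finset.coe_Ioc, Set.mem_Ioc]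
          omega
        · intro y hy y' hy' h
          simp only [Finset.coe_filter, Set.mem_ofPred_eq] at hy hy'
          exact hinj y hy.1 y' hy'.1 (by omega) h
      rw [Nat.card_Ioc] at this
      omega
    have hsplit := Finset.card_filter_add_card_filter_not (s := Q)
      (fun y => 2 * ν + k ≤ 2 * nu y ∨ T < nu y)
    have h2 : ∑ y ∈ Q, (gpot k T g 1 (nu y) D +
        (if 2 * ν + k ≤ 2 * nu y ∨ T < nu y then 6 else 0)) ≤
        ∑ y ∈ Q, (gpot k T g 0 ν D + 2) := by
      apply Finset.sum_le_sum
      intro y hy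
      have h4 := hnu y hy
      split_ifs with h
      · have := gpot_rand_far (D := D) hk hg h1 h ha hb
        omega
      · rcases gpot_rand (D := D) hk hg h1 h4.le with h5 | h5
        · omega
        · omega
    rw [Finset.sum_add_distrib, Finset.sum_const, ← Finset.sum_filter, Finset.sum_const,
      hQ, smul_eq_mul, smul_eq_mul, Nat.mul_add] at h2
    omega
  · have h2 : ∑ y ∈ Q, (gpot k T g 1 (nu y) D + 1) ≤ ∑ y ∈ Q, gpot k T g 0 ν D := by
      apply Finset.sum_le_sum
      intro y hy
      have h4 := hnu y hy
      rcases gpot_rand (D := D) hk hg h1 h4.le with h5 | h5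
      · omega
      · omega
    rw [Finset.sum_add_distrib, Finset.sum_const, Finset.sum_const, hQ, smul_eq_mul,
      smul_eq_mul] at h2
    omega

section steps

variable {k T : ℕ} {σ : ℕ → S}

/-- Potential of the pair `(a, b)` at time `t`. -/
noncomputable def fpot (R : CacheRun S k T σ) (strat : ℕ → Fin 3) (ω : ℕ → ℕ) (g t : ℕ)
    (a b : S) : ℕ :=
  gpot k T g (lab R strat t a) (nextReq σ T (lst σ t a)) (ω (lst σ t b) + g * k)

/-- Total potential at time `t`. -/
noncomputable def PsiT (A R : CacheRun S k T σ) (strat : ℕ → Fin 3) (ω : ℕ → ℕ) (g t : ℕ) : ℕ :=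
  Psi (24 * g + 3) (fpot R strat ω g t) (A.C t) (R.C t)

/-- Misses up to time `t`. -/
noncomputable def missTo (R : CacheRun S k T σ) (t : ℕ) : ℕ :=
  ((Finset.Icc 1 t).filter fun t => σ t ∉ R.C (t - 1)).card

lemma missTo_succ (R : CacheRun S k T σ) (t : ℕ) :
    missTo R (t + 1) = missTo R t + if σ (t + 1) ∉ R.C t then 1 else 0 := by
  unfold missTo
  rw [Finset.card_filter, Finset.card_filter, Finset.sum_Icc_succ_top (by omega)]
  simp

/-- The eviction at time `t` hits an index with a large prediction error. -/
def BadAt (R : CacheRun S k T σ) (ω : ℕ → ℕ) (g t : ℕ) : Prop :=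
  EvictStep R t ∧ g * k ≤ Nat.dist (nextReq σ T (lst σ (t - 1) (R.p t)))
    (ω (lst σ (t - 1) (R.p t)))

lemma fpot_succ (R : CacheRun S k T σ) (strat : ℕ → Fin 3) (ω : ℕ → ℕ) (g : ℕ) {t : ℕ}
    {a b : S} (ha : a ∉ R.C t) (ha' : σ (t + 1) ≠ a) (hb : σ (t + 1) ≠ b) :
    fpot R strat ω g (t + 1) a b = fpot R strat ω g t a b := by
  unfold fpot
  rw [lab_succ_of_mem R strat ha, lst_succ_ne ha', lst_succ_ne hb]

lemma evict_of_hitmiss (A R : CacheRun S k T σ) {t : ℕ} (ht : t + 1 ≤ T)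
    (hA : σ (t + 1) ∈ A.C t) (hR : σ (t + 1) ∉ R.C t) : EvictStep R (t + 1) := by
  rcases sync A R (t := t) (by omega) with h | h
  · exact absurd (h ▸ hA) hR
  · exact ⟨by omega, ht, hR, h.2⟩

lemma insert_hit (A : CacheRun S k T σ) {t : ℕ} (ht : t + 1 ≤ T)
    (hA : σ (t + 1) ∈ A.C t) : A.C (t + 1) = A.C t := by
  rw [not_evictStep_succ ht (fun h => (evictStep_succ h).2.1 hA), Finset.insert_eq_self.2 hA]

lemma step_hitmiss (A R : CacheRun S k T σ) (strat : ℕ → Fin 3) (ω : ℕ → ℕ) (g : ℕ) {t : ℕ}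
    (ht : t + 1 ≤ T) (hA : σ (t + 1) ∈ A.C t) (hR : σ (t + 1) ∉ R.C t)
    {P : Multiset (S × S)} (hP : Valid (A.C t) (R.C t) P)
    (hc : cost (24 * g + 3) (fpot R strat ω g t) P = PsiT A R strat ω g t) {e : S}
    (he : (σ (t + 1), e) ∈ P) :
    PsiT A R strat ω g (t + 1) + fpot R strat ω g t (σ (t + 1)) e ≤ PsiT A R strat ω g t +
      gpot k T g (strat (t + 1)) (nextReq σ T (lst σ t (R.p (t + 1)))) (ω (lst σ t e) + g * k) := by
  have hE := evict_of_hitmiss A R ht hA hR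
  obtain ⟨-, -, -, hp, hC⟩ := evictStep_succ hE
  have hxe : σ (t + 1) ≠ e := fun h => hR (h ▸ (hP.snd_mem he).1)
  have hxp : σ (t + 1) ≠ R.p (t + 1) := fun h => hR (h ▸ hp)
  obtain ⟨P', h1, h2⟩ := move_fine (F := 24 * g + 3) (f := fpot R strat ω g t)
    (f' := fpot R strat ω g (t + 1)) (fun a b => gpot_le _ _ _ _ _ _) hP hA hR he hp
    (fun a b h1 h2 h3 h4 h5 => fpot_succ R strat ω g h2 (Ne.symm h3)
      (fun h => hR (h ▸ h4)))
  have h3 : PsiT A R strat ω g (t + 1) ≤ cost (24 * g + 3) (fpot R strat ω g (t + 1)) P' := by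
    unfold PsiT
    rw [insert_hit A ht hA, hC]
    exact psi_le h1
  have h4 : fpot R strat ω g (t + 1) (R.p (t + 1)) e =
      gpot k T g (strat (t + 1)) (nextReq σ T (lst σ t (R.p (t + 1))))
        (ω (lst σ t e) + g * k) := by
    unfold fpot
    rw [lst_succ_ne hxp, lst_succ_ne hxe]
    simp only [lab]
    rw [if_pos ⟨hE, trivial⟩]
  rw [h4] at h2
  omega

lemma step_optmiss (A R : CacheRun S k T σ) (strat : ℕ → Fin 3) (ω : ℕ → ℕ) (g : ℕ) {t : ℕ}
    (ht : t + 1 ≤ T) (hA : σ (t + 1) ∉ A.C t) :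
    PsiT A R strat ω g (t + 1) ≤ PsiT A R strat ω g t + 3 * (24 * g + 3) := by
  by_cases hfull : EvictStep A (t + 1)
  · obtain ⟨-, -, hk, hz, hCA⟩ := evictStep_succ hfull
    have hRk : (R.C t).card = k := by
      rcases sync A R (t := t) (by omega) with h | h
      · rw [← h, hk]
      · exact h.2
    obtain ⟨P, hP, hc⟩ := exists_psi (24 * g + 3) (fpot R strat ω g t)
      (sync_card A R (t := t) (by omega))
    have hb := fun (a b : S) => gpot_le k T g (lab R strat (t + 1) a)
      (nextReq σ T (lst σ (t + 1) a)) (ω (lst σ (t + 1) b) + g * k)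
    by_cases hR : σ (t + 1) ∈ R.C t
    · obtain ⟨P', h1, h2⟩ := move_opt (F := 24 * g + 3) (f := fpot R strat ω g t)
        (f' := fpot R strat ω g (t + 1)) hb hP hA hR hz
        (fun a b h1 h2 h3 h4 h5 => fpot_succ R strat ω g h2 (fun h => hA (h ▸ h1)) (Ne.symm h5))
      have h3 : PsiT A R strat ω g (t + 1) ≤
          cost (24 * g + 3) (fpot R strat ω g (t + 1)) P' := by
        unfold PsiT
        rw [insert_hit R ht hR, hCA]
        exact psi_le h1
      unfold PsiT at h3 ⊢
      omega
    · have hE : EvictStep R (t + 1) := ⟨by omega, ht, hR, hRk⟩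
      obtain ⟨-, -, -, hp, hC⟩ := evictStep_succ hE
      obtain ⟨P', h1, h2⟩ := move_new (F := 24 * g + 3) (f := fpot R strat ω g t)
        (f' := fpot R strat ω g (t + 1)) hb hP hA hR hp
        (fun a b h1 h2 h3 h4 => fpot_succ R strat ω g h2 (fun h => hA (h ▸ h1))
          (fun h => hR (h ▸ h3)))
      obtain ⟨P'', h3, h4⟩ := move_opt (F := 24 * g + 3) (f := fpot R strat ω g (t + 1))
        (f' := fpot R strat ω g (t + 1)) hb h1 hA (Finset.mem_insert_self _ _) hz
        (fun a b h1 h2 h3 h4 h5 => rfl)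
      have h5 : PsiT A R strat ω g (t + 1) ≤
          cost (24 * g + 3) (fpot R strat ω g (t + 1)) P'' := by
        unfold PsiT
        rw [hC, hCA]
        exact psi_le h3
      unfold PsiT at h5 ⊢
      omega
  · have hk : ¬ (A.C t).card = k := fun h => hfull ⟨by omega, ht, hA, h⟩
    have hAR : A.C t = R.C t := by
      rcases sync A R (t := t) (by omega) with h | h
      · exact h
      · exact absurd h.1 hk
    have hC : A.C (t + 1) = R.C (t + 1) := by
      rw [not_evictStep_succ ht hfull,
        not_evictStep_succ ht (fun h' => hk (hAR ▸ (evictStep_succ h').2.2.1)), hAR]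
    have : PsiT A R strat ω g (t + 1) ≤ cost (24 * g + 3) (fpot R strat ω g (t + 1)) 0 := by
      apply psi_le
      rw [hC]
      simp [Valid]
    simp [cost] at this
    omega

lemma step_hithit (A R : CacheRun S k T σ) (strat : ℕ → Fin 3) (ω : ℕ → ℕ) (g : ℕ) {t : ℕ}
    (ht : t + 1 ≤ T) (hA : σ (t + 1) ∈ A.C t) (hR : σ (t + 1) ∈ R.C t) :
    PsiT A R strat ω g (t + 1) ≤ PsiT A R strat ω g t := by
  obtain ⟨P, hP, hc⟩ := exists_psi (24 * g + 3) (fpot R strat ω g t)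
    (sync_card A R (t := t) (by omega))
  unfold PsiT
  rw [insert_hit A ht hA, insert_hit R ht hR, ← hc, ← cost_congr (f' := fpot R strat ω g (t + 1))]
  · exact psi_le hP
  · intro p hp
    exact fpot_succ R strat ω g (hP.fst_mem hp).2 (fun h => (hP.fst_mem hp).2 (h ▸ hR))
      (fun h => (hP.snd_mem hp).2 (h ▸ hA))

/-- The deterministic part of the amortized analysis. -/
lemma step_det (A R : CacheRun S k T σ) (strat : ℕ → Fin 3) (ω : ℕ → ℕ) {g : ℕ} (hk : 0 < k)
    (hg : 0 < g) (hR : IsAlternatingOracle R ω strat) {t : ℕ}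
    (ht : t + 1 ≤ T) (hn : ¬ (σ (t + 1) ∈ A.C t ∧ σ (t + 1) ∉ R.C t ∧
      lab R strat t (σ (t + 1)) = 0)) :
    PsiT A R strat ω g (t + 1) + missTo R (t + 1) ≤ PsiT A R strat ω g t + missTo R t +
      ((if σ (t + 1) ∉ A.C t then 72 * g + 10 else 0) + if BadAt R ω g (t + 1) then 3 else 0) := by
  rw [missTo_succ]
  by_cases hxA : σ (t + 1) ∈ A.C t
  · by_cases hxR : σ (t + 1) ∈ R.C t
    · have := step_hithit A R strat ω g ht hxA hxR
      simp only [hxA, hxR, not_true_eq_false, if_false]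
      omega
    · have hE := evict_of_hitmiss A R ht hxA hxR
      obtain ⟨-, -, -, hp, hC⟩ := evictStep_succ hE
      obtain ⟨P, hP, hc⟩ := exists_psi (24 * g + 3) (fpot R strat ω g t)
        (sync_card A R (t := t) (by omega))
      obtain ⟨e, he⟩ := hP.exists_fst hxA hxR
      have heR : e ∈ R.C t := (hP.snd_mem he).1
      have hreq := mem_req A (t := t) (by omega) hxA
      have hmain := step_hitmiss A R strat ω g ht hxA hxR hP hc he
      have hf : fpot R strat ω g t (σ (t + 1)) e =
          gpot k T g (lab R strat t (σ (t + 1))) (t + 1) (ω (lst σ t e) + g * k) := by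
        unfold fpot
        rw [nextReq_lst_eq hreq ht rfl]
      have hnu : t + 1 < nextReq σ T (lst σ t (R.p (t + 1))) :=
        nextReq_lst_gt (mem_req R (by omega) hp) ht (fun h => hxR (h ▸ hp))
      have hLE := lastEvictedWith_lab R strat ht hreq hxR
      obtain ⟨-, -, hCor, hBl⟩ := hR (t + 1) hE
      have hpi := mem_lastIdx_lst R (t := t) (by omega) hp
      have hei := mem_lastIdx_lst R (t := t) (by omega) heR
      have hps := (lst_spec (mem_req R (t := t) (by omega) hp)).2.2.1
      have hgk : 0 < g * k := Nat.mul_pos hg hk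
      have hbad : ∀ h : ¬ BadAt R ω g (t + 1),
          Nat.dist (nextReq σ T (lst σ t (R.p (t + 1)))) (ω (lst σ t (R.p (t + 1)))) < g * k := by
        intro h
        by_contra h'
        exact h ⟨hE, by simpa using h'⟩
      simp only [hxA, hxR, not_true_eq_false, not_false_eq_true, if_true, if_false]
      rw [hf] at hmain
      have h3 : lab R strat t (σ (t + 1)) = 1 ∨ lab R strat t (σ (t + 1)) = 2 := by
        have : lab R strat t (σ (t + 1)) ≠ 0 := fun h => hn ⟨hxA, hxR, h⟩
        revert this
        generalize lab R strat t (σ (t + 1)) = l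
        revert l
        decide
      rcases h3 with h3 | h3
      · rw [h3] at hLE hmain
        obtain ⟨h4, h5, -⟩ := hCor hLE
        rw [h4] at hmain
        by_cases hr : t + 1 < ω (lst σ t e) + g * k
        · have := gpot_corr_pos (T := T) hk hg ht hnu.le hr
          omega
        · have hw : ω (lst σ t e) < t + 1 := by omega
          obtain ⟨h6, h7⟩ := h5 ⟨_, hei, hw⟩ _ hpi hps.symm
          have h8 := h7 _ hei hw
          have hB : BadAt R ω g (t + 1) := by
            by_contra hB
            have := hbad hB
            unfold Nat.dist at this
            omega
          rw [if_pos hB]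
          have := gpot_two_le (k := k) (T := T) (g := g)
            (ν := nextReq σ T (lst σ t (R.p (t + 1)))) (D := ω (lst σ t e) + g * k) (by omega)
          omega
      · rw [h3] at hLE hmain
        obtain ⟨h4, h5⟩ := hBl hLE
        rw [h4] at hmain
        have h6 := h5 _ hpi hps.symm _ hei
        by_cases hB : BadAt R ω g (t + 1)
        · rw [if_pos hB]
          have := gpot_blind_bad (D := ω (lst σ t e) + g * k) hk hg ht hnu.le
          omega
        · have h7 := hbad hB
          unfold Nat.dist at h7
          have := gpot_blind_good (D := ω (lst σ t e) + g * k) hk hg ht hnu.le (by omega)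
          omega
  · have := step_optmiss A R strat ω g ht hxA
    simp only [hxA, not_false_eq_true, if_true]
    split_ifs <;> omega

/-- Every index is evicted at most once, so bad evictions are paid for by the total loss. -/
lemma bad_le (R : CacheRun S k T σ) (ω : ℕ → ℕ) (g : ℕ) :
    ((Finset.Icc 1 T).filter fun t => BadAt R ω g t).card * (g * k) ≤ totalLoss σ T ω := by
  have hspec : ∀ t, EvictStep R t → R.p t ∈ R.C (t - 1) ∧
      1 ≤ lst σ (t - 1) (R.p t) ∧ lst σ (t - 1) (R.p t) ≤ t - 1 ∧
      σ (lst σ (t - 1) (R.p t)) = R.p t := by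
    intro t h
    have hp := R.evict_mem t h.1 h.2.1 h.2.2.1 h.2.2.2
    obtain ⟨a, b, c, d⟩ := lst_spec (mem_req R (t := t - 1) (by have := h.2.1; omega) hp)
    exact ⟨hp, a, b, c⟩
  have hlt : ∀ t t', EvictStep R t → EvictStep R t' → t < t' →
      lst σ (t - 1) (R.p t) ≠ lst σ (t' - 1) (R.p t') := by
    intro t t' h h' htt heq
    obtain ⟨a, b, c, d⟩ := hspec t h
    obtain ⟨a', b', c', d'⟩ := hspec t' h'
    have hpp : R.p t = R.p t' := by rw [← d, ← d', heq]
    have ht1 := h.1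
    have hT' := h'.2.1
    obtain ⟨s, rfl⟩ : ∃ s, t = s + 1 := ⟨t - 1, by omega⟩
    obtain ⟨-, hx, -, hp, hC⟩ := evictStep_succ h
    have hout : R.p (s + 1) ∉ R.C (s + 1) := by
      rw [hC]
      simp only [Finset.mem_insert, Finset.mem_erase]
      rintro (h3 | h3)
      · exact hx (h3 ▸ hp)
      · exact h3.1 rfl
    refine stay_out_s16 R (t := s + 1) (t' := t' - 1) (by omega) (by omega) hout ?_ (hpp ▸ a')
    intro j h1 h2 h3
    refine (lst_spec (mem_req R (t := t' - 1) (by omega) a')).2.2.2 j ?_ h2 (hpp ▸ h3)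
    omega
  have hinj : Set.InjOn (fun t => lst σ (t - 1) (R.p t))
      ((Finset.Icc 1 T).filter fun t => BadAt R ω g t : Finset ℕ) := by
    intro t h t' h' heq
    simp only [Finset.coe_filter, Set.mem_ofPred_eq] at h h'
    rcases lt_trichotomy t t' with hl | hl | hl
    · exact absurd heq (hlt _ _ h.2.1 h'.2.1 hl)
    · exact hl
    · exact absurd heq.symm (hlt _ _ h'.2.1 h.2.1 hl)
  rw [← Finset.card_image_of_injOn hinj, ← smul_eq_mul, ← Finset.sum_const]
  unfold totalLoss
  refine le_trans (Finset.sum_le_sum (g := fun i => Nat.dist (nextReq σ T i) (ω i)) ?_)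
    (Finset.sum_le_sum_of_subset ?_)
  · intro i hi
    simp only [Finset.mem_image, Finset.mem_filter] at hi
    obtain ⟨t, h, rfl⟩ := hi
    exact h.2.2
  · intro i hi
    simp only [Finset.mem_image, Finset.mem_filter] at hi
    obtain ⟨t, h, rfl⟩ := hi
    obtain ⟨a, b, c, d⟩ := hspec t h.2.1
    have := h.2.1.2.1
    simp only [Finset.mem_Icc]
    omega

end steps

/-! ### Averaging over the seeds -/

section average

lemma sum_update {k n : ℕ} (τ : Fin n) (G : (Fin n → Fin k) → ℕ) :
    ∑ u : Fin n → Fin k, ∑ v : Fin k, G (Function.update u τ v) = k * ∑ u, G u := by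
  rw [← Finset.sum_product', Finset.univ_product_univ]
  let φ : (Fin n → Fin k) × Fin k → (Fin n → Fin k) × Fin k :=
    fun q => (Function.update q.1 τ q.2, q.1 τ)
  have hφ : Function.Involutive φ := by
    rintro ⟨u, v⟩
    simp [φ]
  have h := Equiv.sum_comp hφ.toPerm (fun q : (Fin n → Fin k) × Fin k => G q.1)
  have h2 : ∑ q : (Fin n → Fin k) × Fin k, G (Function.update q.1 τ q.2) =
      ∑ q : (Fin n → Fin k) × Fin k, G q.1 := by
    rw [← h]; rfl
  rw [h2, ← Finset.univ_product_univ, Finset.sum_product, Finset.mul_sum]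
  simp

variable {k T : ℕ} {σ : ℕ → S}

lemma adapted_lab {R : (Fin (T + 1) → Fin k) → CacheRun S k T σ}
    {strat : (Fin (T + 1) → Fin k) → ℕ → Fin 3} (h : Adapted R strat)
    {u u' : Fin (T + 1) → Fin k} {t : ℕ} (huu : ∀ s : Fin (T + 1), (s : ℕ) ≤ t → u s = u' s) :
    lab (R u) (strat u) t = lab (R u') (strat u') t := by
  induction t with
  | zero => rfl
  | succ t ih =>
    obtain ⟨h1, h2, h3⟩ := h u u' (t + 1) huu
    have huu' : ∀ s : Fin (T + 1), (s : ℕ) ≤ t → u s = u' s := fun s hs => huu s (by omega)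
    obtain ⟨h4, -, -⟩ := h u u' t huu'
    have hE : EvictStep (R u) (t + 1) = EvictStep (R u') (t + 1) := by
      simp only [EvictStep, Nat.add_sub_cancel, h4]
    ext1 s
    simp only [lab, hE, h2, h3, ih huu']

/-- Amount paid at time `t`. -/
noncomputable def pay (A R : CacheRun S k T σ) (ω : ℕ → ℕ) (g t : ℕ) : ℕ :=
  (if σ t ∉ A.C (t - 1) then 72 * g + 10 else 0) + if BadAt R ω g t then 3 else 0

lemma step_avg (A : CacheRun S k T σ) (ω : ℕ → ℕ) {g : ℕ} (hk : 0 < k) (hg : 0 < g)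
    {R : (Fin (T + 1) → Fin k) → CacheRun S k T σ}
    {strat : (Fin (T + 1) → Fin k) → ℕ → Fin 3}
    (hR : ∀ u, IsAlternatingOracleSeeded (R u) ω (strat u) u)
    (hAd : Adapted R strat) {t : ℕ} (ht : t + 1 ≤ T) (u : Fin (T + 1) → Fin k) (τ : Fin (T + 1))
    (hτ : (τ : ℕ) = t + 1) :
    ∑ v : Fin k, (PsiT A (R (Function.update u τ v)) (strat (Function.update u τ v)) ω g (t + 1) +
        missTo (R (Function.update u τ v)) (t + 1)) ≤
      ∑ v : Fin k, (PsiT A (R (Function.update u τ v)) (strat (Function.update u τ v)) ω g t +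
        missTo (R (Function.update u τ v)) t + pay A (R (Function.update u τ v)) ω g (t + 1)) := by
  have hag : ∀ v, ∀ s : Fin (T + 1), (s : ℕ) ≤ t → Function.update u τ v s = u s := by
    intro v s hs
    rw [Function.update_of_ne]
    rintro rfl
    omega
  have hC : ∀ v, (R (Function.update u τ v)).C t = (R u).C t := fun v => (hAd _ _ t (hag v)).1
  have hL : ∀ v, lab (R (Function.update u τ v)) (strat (Function.update u τ v)) t =
      lab (R u) (strat u) t := fun v => adapted_lab hAd (hag v)
  by_cases hn : σ (t + 1) ∈ A.C t ∧ σ (t + 1) ∉ (R u).C t ∧ lab (R u) (strat u) t (σ (t + 1)) = 0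
  · obtain ⟨hxA, hxR, hlab⟩ := hn
    have hxRv : ∀ v, σ (t + 1) ∉ (R (Function.update u τ v)).C t := fun v => by rw [hC]; exact hxR
    have hreq := mem_req A (t := t) (by omega) hxA
    have hE := fun v => evict_of_hitmiss A (R (Function.update u τ v)) ht hxA (hxRv v)
    have hstr : ∀ v, strat (Function.update u τ v) (t + 1) = 1 := by
      intro v
      have h1 := lastEvictedWith_lab (R (Function.update u τ v)) (strat (Function.update u τ v))
        ht hreq (hxRv v)
      rw [hL, hlab] at h1
      exact ((hR (Function.update u τ v)).1 (t + 1) (hE v)).2.1 h1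
    obtain ⟨P, hP, hc⟩ := exists_psi (24 * g + 3) (fpot (R u) (strat u) ω g t)
      (sync_card A (R u) (t := t) (by omega))
    obtain ⟨e, he⟩ := hP.exists_fst hxA hxR
    have hf : ∀ v, fpot (R (Function.update u τ v)) (strat (Function.update u τ v)) ω g t =
        fpot (R u) (strat u) ω g t := by
      intro v
      ext a b
      simp only [fpot, hL]
    set y : Fin k → S := fun v => (R (Function.update u τ v)).p (t + 1) with hy
    have hyQ : ∀ v, y v ∈ (R u).C t := by
      intro v
      have := (evictStep_succ (hE v)).2.2.2.1
      rw [hC] at this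
      exact this
    have hQk : ((R u).C t).card = k := by
      have := (evictStep_succ (evict_of_hitmiss A (R u) ht hxA hxR)).2.2.1
      exact this
    have hrank : ∀ v, ((lastIdx (R u) t).filter fun j => j < lst σ t (y v)).card = (v : ℕ) := by
      intro v
      have h0 : lst σ t (y v) ∈ lastIdx (R (Function.update u τ v)) t :=
        mem_lastIdx_lst _ (by omega) (by rw [hC]; exact hyQ v)
      have h1 := (hR (Function.update u τ v)).2 (t + 1) (hE v) (hstr v) _ h0
        ((lst_spec (mem_req (R u) (t := t) (by omega) (hyQ v))).2.2.1).symm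
      have h2 : lastIdx (R (Function.update u τ v)) t = lastIdx (R u) t := by
        unfold lastIdx
        ext i
        simp only [Finset.mem_filter, hC]
      have h3 : (⟨t + 1, Nat.lt_succ_of_le (hE v).2.1⟩ : Fin (T + 1)) = τ := Fin.ext hτ.symm
      rw [h3, Function.update_self] at h1
      rw [← h1, ← h2]
      rfl
    have hyinj : Function.Injective y := by
      intro v v' h
      apply Fin.ext
      rw [← hrank v, ← hrank v', h]
    have himg : Finset.univ.image y = (R u).C t := by
      apply Finset.eq_of_subset_of_card_le
      · intro s hs
        simp only [Finset.mem_image, Finset.mem_univ, true_and] at hs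
        obtain ⟨v, rfl⟩ := hs
        exact hyQ v
      · rw [Finset.card_image_of_injective _ hyinj, hQk]
        simp
    have hsum := sum_rand (S := S) (D := ω (lst σ t e) + g * k) hk hg ht ((R u).C t) hQk
      (fun s => nextReq σ T (lst σ t s))
      (fun s hs => nextReq_lst_gt (mem_req (R u) (by omega) hs) ht (fun h => hxR (h ▸ hs)))
      (by
        intro s hs s' hs' h1 h2
        have a1 := (lst_spec (mem_req (R u) (t := t) (by omega) hs)).2.2.1
        have a2 := (lst_spec (mem_req (R u) (t := t) (by omega) hs')).2.2.1
        have b1 := ((nextReq_spec σ T (lst σ t s)).1 h1).2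
        have b2 := ((nextReq_spec σ T (lst σ t s')).1 (h2 ▸ h1)).2
        rw [← a1, ← a2, ← b1, ← b2, h2])
    rw [← himg, Finset.sum_image (fun a _ b _ h => hyinj h)] at hsum
    have hfx : fpot (R u) (strat u) ω g t (σ (t + 1)) e =
        gpot k T g 0 (t + 1) (ω (lst σ t e) + g * k) := by
      unfold fpot
      rw [nextReq_lst_eq hreq ht rfl, hlab]
    have hv : ∀ v : Fin k, (PsiT A (R (Function.update u τ v)) (strat (Function.update u τ v)) ω g
          (t + 1) + missTo (R (Function.update u τ v)) (t + 1)) +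
          gpot k T g 0 (t + 1) (ω (lst σ t e) + g * k) ≤
        (PsiT A (R (Function.update u τ v)) (strat (Function.update u τ v)) ω g t +
          missTo (R (Function.update u τ v)) t + pay A (R (Function.update u τ v)) ω g (t + 1)) +
        (1 + gpot k T g 1 (nextReq σ T (lst σ t (y v))) (ω (lst σ t e) + g * k)) := by
      intro v
      have h1 := step_hitmiss A (R (Function.update u τ v)) (strat (Function.update u τ v)) ω g ht
        hxA (hxRv v) (P := P) (by rw [hC]; exact hP)
        (by unfold PsiT; rw [hf, hC, hc]) he
      rw [hf, hfx, hstr] at h1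
      rw [missTo_succ, if_pos (hxRv v)]
      have hyv : (R (Function.update u τ v)).p (t + 1) = y v := rfl
      rw [hyv] at h1
      omega
    have hfin := Finset.sum_le_sum (fun v (_ : v ∈ Finset.univ) => hv v)
    rw [Finset.sum_add_distrib] at hfin
    conv at hfin => rhs; rw [Finset.sum_add_distrib]
    rw [Finset.sum_add_distrib (f := fun _ : Fin k => 1)] at hfin
    simp only [Finset.sum_const, Finset.card_univ, Fintype.card_fin, smul_eq_mul, mul_one] at hfin
    omega
  · apply Finset.sum_le_sum
    intro v _
    have := step_det A (R (Function.update u τ v)) (strat (Function.update u τ v)) ω hk hg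
      (hR (Function.update u τ v)).1 ht (by rw [hC, hL]; exact hn)
    exact this

lemma total_bound (A : CacheRun S k T σ) (ω : ℕ → ℕ) {g : ℕ} (hk : 0 < k) (hg : 0 < g)
    {R : (Fin (T + 1) → Fin k) → CacheRun S k T σ}
    {strat : (Fin (T + 1) → Fin k) → ℕ → Fin 3}
    (hR : ∀ u, IsAlternatingOracleSeeded (R u) ω (strat u) u)
    (hAd : Adapted R strat) {t : ℕ} (ht : t ≤ T) :
    ∑ u, (PsiT A (R u) (strat u) ω g t + missTo (R u) t) ≤
      ∑ u, ∑ s ∈ Finset.Icc 1 t, pay A (R u) ω g s := by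
  induction t with
  | zero =>
    apply Finset.sum_le_sum
    intro u _
    have h1 : PsiT A (R u) (strat u) ω g 0 ≤
        cost (24 * g + 3) (fpot (R u) (strat u) ω g 0) 0 := by
      apply psi_le
      rw [A.init, (R u).init]
      simp [Valid]
    have h2 : missTo (R u) 0 = 0 := by simp [missTo]
    simp [cost] at h1
    omega
  | succ t ih =>
    have ih := ih (by omega)
    let τ : Fin (T + 1) := ⟨t + 1, by omega⟩
    have h1 := Finset.sum_le_sum (fun u (_ : u ∈ Finset.univ) =>
      step_avg A ω hk hg hR hAd ht u τ rfl)
    rw [sum_update τ (fun u => PsiT A (R u) (strat u) ω g (t + 1) + missTo (R u) (t + 1)),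
      sum_update τ (fun u => PsiT A (R u) (strat u) ω g t + missTo (R u) t +
        pay A (R u) ω g (t + 1))] at h1
    have h2 := Nat.le_of_mul_le_mul_left h1 hk
    simp only [Finset.sum_Icc_succ_top (show 1 ≤ t + 1 by omega)]
    rw [Finset.sum_add_distrib] at h2
    conv at h2 => rhs; rw [Finset.sum_add_distrib]
    rw [Finset.sum_add_distrib] at ih ⊢
    conv => rhs; rw [Finset.sum_add_distrib]
    rw [Finset.sum_add_distrib] at h2
    omega

lemma pay_sum (A R : CacheRun S k T σ) (ω : ℕ → ℕ) (g : ℕ) :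
    ∑ s ∈ Finset.Icc 1 T, pay A R ω g s = (72 * g + 10) * misses A +
      3 * ((Finset.Icc 1 T).filter fun t => BadAt R ω g t).card := by
  unfold pay misses
  rw [Finset.sum_add_distrib, ← Finset.sum_filter, ← Finset.sum_filter, Finset.sum_const,
    Finset.sum_const, smul_eq_mul, smul_eq_mul]
  ring

lemma real_bound (A : CacheRun S k T σ) (ω : ℕ → ℕ) {g : ℕ} (hk : 0 < k) (hg : 0 < g)
    {R : (Fin (T + 1) → Fin k) → CacheRun S k T σ}
    {strat : (Fin (T + 1) → Fin k) → ℕ → Fin 3}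
    (hR : ∀ u, IsAlternatingOracleSeeded (R u) ω (strat u) u)
    (hAd : Adapted R strat) :
    (∑ u : Fin (T + 1) → Fin k, (misses (R u) : ℝ)) / (k : ℝ) ^ (T + 1) ≤
      (72 * g + 10) * misses A + 3 * (totalLoss σ T ω / (g * k)) := by
  have hk' : (0 : ℝ) < k := by exact_mod_cast hk
  have hg' : (0 : ℝ) < g := by exact_mod_cast hg
  rw [div_le_iff₀ (by positivity)]
  have h1 := total_bound A ω hk hg hR hAd le_rfl
  have h2 : ∑ u, misses (R u) ≤ ∑ u, ∑ s ∈ Finset.Icc 1 T, pay A (R u) ω g s := by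
    refine le_trans (Finset.sum_le_sum fun u _ => ?_) h1
    exact Nat.le_add_left _ _
  have h3 : (∑ u, (misses (R u) : ℝ)) ≤
      ∑ u : Fin (T + 1) → Fin k, ((∑ s ∈ Finset.Icc 1 T, pay A (R u) ω g s : ℕ) : ℝ) := by
    exact_mod_cast h2
  refine h3.trans ?_
  have h4 : ∀ u : Fin (T + 1) → Fin k, ((∑ s ∈ Finset.Icc 1 T, pay A (R u) ω g s : ℕ) : ℝ) ≤
      (72 * g + 10) * misses A + 3 * (totalLoss σ T ω / (g * k)) := by
    intro u
    rw [pay_sum]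
    push_cast
    have h5 : (((Finset.Icc 1 T).filter fun t => BadAt (R u) ω g t).card : ℝ) ≤
        totalLoss σ T ω / (g * k) := by
      rw [le_div_iff₀ (by positivity)]
      exact_mod_cast bad_le (R u) ω g
    linarith
  refine (Finset.sum_le_sum fun u _ => h4 u).trans ?_
  rw [Finset.sum_const, Finset.card_univ]
  simp only [Fintype.card_pi, Fintype.card_fin, Finset.prod_const, Finset.card_univ, nsmul_eq_mul]
  push_cast
  rw [mul_comm]

end average

/-- There are absolute constants `C` and `c` such that for every
caching instance with `k ≥ 10`, the AlternatingOracle strategy (driven by uniform i.i.d.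
seeds) satisfies `E[OBJ_B] ≤ C·(OPT + √(η·OPT/k)) + c`; in particular it is
`O(√((1/k)·(η/OPT)))`-competitive. -/
theorem stmt16 :
    ∃ C c : ℝ, ∀ (S : Type) [DecidableEq S] (k T : ℕ) (σ : ℕ → S) (ω : ℕ → ℕ)
      (A : CacheRun S k T σ), 10 ≤ k → IsBelady A →
      ∀ (R : (Fin (T + 1) → Fin k) → CacheRun S k T σ)
        (strat : (Fin (T + 1) → Fin k) → ℕ → Fin 3),
        (∀ u, IsAlternatingOracleSeeded (R u) ω (strat u) u) →
        Adapted R strat →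
        (∑ u : Fin (T + 1) → Fin k, (misses (R u) : ℝ)) / (k : ℝ) ^ (T + 1) ≤
          C * (misses A + Real.sqrt (totalLoss σ T ω * misses A / k)) + c := by
  refine ⟨154, 0, ?_⟩
  intro S _ k T σ ω A hk _ R strat hR hAd
  have hk0 : 0 < k := by omega
  have hk' : (0 : ℝ) < k := by exact_mod_cast hk0
  by_cases hM : misses A = 0
  · have hT : T = 0 := by
      by_contra hT
      unfold misses at hM
      rw [Finset.card_eq_zero] at hM
      have h1 : 1 ∈ (Finset.Icc 1 T).filter fun t => σ t ∉ A.C (t - 1) := by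
        simp only [Finset.mem_filter, Finset.mem_Icc]
        refine ⟨⟨le_rfl, by omega⟩, ?_⟩
        simp [A.init]
      rw [hM] at h1
      simp at h1
    subst hT
    have h2 : ∀ u, (misses (R u) : ℝ) = 0 := by
      intro u
      simp [misses]
    simp only [h2, Finset.sum_const_zero, zero_div, add_zero]
    positivity
  · have hM' : (0 : ℝ) < misses A := by exact_mod_cast Nat.pos_of_ne_zero hM
    set M : ℝ := ((misses A : ℕ) : ℝ) with hMdef
    set η : ℝ := ((totalLoss σ T ω : ℕ) : ℝ) with hη
    have hη0 : 0 ≤ η := by rw [hη]; positivity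
    set r : ℝ := Real.sqrt (η * M / k) with hr
    have hr0 : 0 ≤ r := Real.sqrt_nonneg _
    have hrr : r * r = η * M / k := Real.mul_self_sqrt (by positivity)
    set g : ℕ := ⌈r / M⌉₊ + 1 with hgdef
    have hg : 0 < g := by omega
    have hg' : (0 : ℝ) < g := by exact_mod_cast hg
    have hgl : r / M ≤ g := by
      rw [hgdef]; push_cast
      have := Nat.le_ceil (r / M)
      linarith
    have hgu : (g : ℝ) ≤ r / M + 2 := by
      rw [hgdef]; push_cast
      have := Nat.ceil_lt_add_one (a := r / M) (by positivity)
      linarith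
    have hb := real_bound A ω hk0 hg hR hAd
    simp only [← hMdef, ← hη] at hb
    have h1 : g * M ≤ r + 2 * M := by
      have := mul_le_mul_of_nonneg_right hgu hM'.le
      have h3 : (r / M + 2) * M = r + 2 * M := by field_simp
      linarith
    have h2 : η / (g * k) ≤ r := by
      rw [div_le_iff₀ (by positivity)]
      have h3 : r ≤ g * M := by rwa [div_le_iff₀ hM'] at hgl
      have h4 : η * M = r * r * k := by rw [hrr]; field_simp
      have h5 : r * r * k ≤ r * (g * M) * k := by gcongr
      have h6 : η * M ≤ (r * (g * k)) * M := by nlinarith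
      exact le_of_mul_le_mul_right h6 hM'
    nlinarith

end Caching
end
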